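/- Let (Ω_n, P_n, π_n) be a sequence of finite irreducible reversible Markov chains exhibiting a continuous-time cutoff. Then lim_{n→∞} t_ave^{(n)}(1/4) / t_c^{(n)}(1/4) = 1 and lim_{n→∞} t_L^{(n)}(1/4) / (2 t_c^{(n)}(1/4)) = 1. -/

import Mathlib

open Matrix Filter Asymptotics

/-- `P` is a stochastic matrix. -/
def IsStochastic {Ω : Type*} [Fintype Ω] (P : Matrix Ω Ω ℝ) : Prop :=
  (∀ x y, 0 ≤ P x y) ∧ ∀ x, ∑ y, P x y = 1

/-- `P` is irreducible. -/
def IsIrreducibleMatrix {Ω : Type*} [Fintype Ω] [DecidableEq Ω] (P : Matrix Ω Ω ℝ) : Prop :=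
  ∀ x y, ∃ n : ℕ, 0 < (P ^ n) x y

/-- `μ` is a probability vector. -/
def IsProbVec {Ω : Type*} [Fintype Ω] (μ : Ω → ℝ) : Prop :=
  (∀ x, 0 ≤ μ x) ∧ ∑ x, μ x = 1

/-- The chain `(P, pi)` is reversible. -/
def IsReversible {Ω : Type*} [Fintype Ω] (P : Matrix Ω Ω ℝ) (pi : Ω → ℝ) : Prop :=
  ∀ x y, pi x * P x y = pi y * P y x

/-- A finite irreducible Markov chain `P` with stationary distribution `pi`. -/
def IsMC {Ω : Type*} [Fintype Ω] [DecidableEq Ω] (P : Matrix Ω Ω ℝ) (pi : Ω → ℝ) : Prop :=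
  IsStochastic P ∧ IsIrreducibleMatrix P ∧ IsProbVec pi ∧ pi ᵥ* P = pi

/-- A finite irreducible reversible Markov chain `P` with stationary distribution `pi`. -/
def IsRevMC {Ω : Type*} [Fintype Ω] [DecidableEq Ω] (P : Matrix Ω Ω ℝ) (pi : Ω → ℝ) : Prop :=
  IsMC P pi ∧ IsReversible P pi

/-- Total-variation distance between two measures on a finite set. -/
noncomputable def tvDist {Ω : Type*} [Fintype Ω] (μ ν : Ω → ℝ) : ℝ :=
  (∑ x, |μ x - ν x|) / 2

/-- The lazy version `(I + P)/2` of `P`. -/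
noncomputable def lazyM {Ω : Type*} [Fintype Ω] [DecidableEq Ω] (P : Matrix Ω Ω ℝ) :
    Matrix Ω Ω ℝ :=
  (2 : ℝ)⁻¹ • (1 + P)

/-- `d_c(t, μ)`: TV distance from stationarity of the continuous-time chain at time `t`,
started from `μ`. -/
noncomputable def contDist {Ω : Type*} [Fintype Ω] [DecidableEq Ω] (P : Matrix Ω Ω ℝ) (pi : Ω → ℝ)
    (t : ℝ) (μ : Ω → ℝ) : ℝ :=
  tvDist (fun y => ∑' k : ℕ, Real.exp (-t) * t ^ k / (Nat.factorial k) * (μ ᵥ* (P ^ k)) y) pi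

/-- `d_L(t, μ)`: TV distance from stationarity of the lazy chain at (discrete) time `t`,
started from `μ`. -/
noncomputable def lazyDist {Ω : Type*} [Fintype Ω] [DecidableEq Ω] (P : Matrix Ω Ω ℝ)
    (pi : Ω → ℝ) (t : ℝ) (μ : Ω → ℝ) : ℝ :=
  tvDist (μ ᵥ* (lazyM P ^ ⌊t⌋₊)) pi

/-- `d_ave(t, μ)`: TV distance from stationarity of the averaged chain at (discrete) time `t`,
started from `μ`. -/
noncomputable def aveDist {Ω : Type*} [Fintype Ω] [DecidableEq Ω] (P : Matrix Ω Ω ℝ) (pi : Ω → ℝ)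
    (t : ℝ) (μ : Ω → ℝ) : ℝ :=
  tvDist (fun y => ((μ ᵥ* (P ^ ⌊t⌋₊)) y + (μ ᵥ* (P ^ (⌊t⌋₊ + 1))) y) / 2) pi

/-- The point mass at `x`. -/
noncomputable def deltaMass {Ω : Type*} [DecidableEq Ω] (x : Ω) : Ω → ℝ :=
  fun y => if y = x then 1 else 0

/-- Worst-case continuous-time distance `d_c(t)`. -/
noncomputable def contDistMax {Ω : Type*} [Fintype Ω] [DecidableEq Ω] (P : Matrix Ω Ω ℝ)
    (pi : Ω → ℝ) (t : ℝ) : ℝ :=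
  ⨆ x : Ω, contDist P pi t (deltaMass x)

/-- Worst-case lazy distance `d_L(t)`. -/
noncomputable def lazyDistMax {Ω : Type*} [Fintype Ω] [DecidableEq Ω] (P : Matrix Ω Ω ℝ)
    (pi : Ω → ℝ) (t : ℝ) : ℝ :=
  ⨆ x : Ω, lazyDist P pi t (deltaMass x)

/-- Worst-case averaged distance `d_ave(t)`. -/
noncomputable def aveDistMax {Ω : Type*} [Fintype Ω] [DecidableEq Ω] (P : Matrix Ω Ω ℝ)
    (pi : Ω → ℝ) (t : ℝ) : ℝ :=
  ⨆ x : Ω, aveDist P pi t (deltaMass x)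

/-- `φ_{α,C}(t) = t + ⌈C t^{(1+2α)/2} √(α log t)⌉`. -/
noncomputable def phiAC (α C t : ℝ) : ℝ :=
  t + ((⌈C * t ^ ((1 + 2 * α) / 2) * Real.sqrt (α * Real.log t)⌉ : ℤ) : ℝ)

/-- `ψ_{α,C}(x) = min (1, x + C |log(2x)|^{-α})`. -/
noncomputable def psiAC (α C x : ℝ) : ℝ :=
  min 1 (x + C * |Real.log (2 * x)| ^ (-α))

/-- `t_c(ε)`, the `ε`-mixing time of the continuous-time chain. -/
noncomputable def contMix {Ω : Type*} [Fintype Ω] [DecidableEq Ω] (P : Matrix Ω Ω ℝ)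
    (pi : Ω → ℝ) (ε : ℝ) : ℝ :=
  sInf {t : ℝ | 0 ≤ t ∧ contDistMax P pi t ≤ ε}

/-- `t_L(ε)`, the `ε`-mixing time of the lazy chain. -/
noncomputable def lazyMix {Ω : Type*} [Fintype Ω] [DecidableEq Ω] (P : Matrix Ω Ω ℝ)
    (pi : Ω → ℝ) (ε : ℝ) : ℕ :=
  sInf {t : ℕ | lazyDistMax P pi t ≤ ε}

/-- `t_ave(ε)`, the `ε`-mixing time of the averaged chain. -/
noncomputable def aveMix {Ω : Type*} [Fintype Ω] [DecidableEq Ω] (P : Matrix Ω Ω ℝ)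
    (pi : Ω → ℝ) (ε : ℝ) : ℕ :=
  sInf {t : ℕ | aveDistMax P pi t ≤ ε}

/-- The sequence of continuous-time chains exhibits cutoff. -/
def ContCutoff {Ω : ℕ → Type} [∀ n, Fintype (Ω n)] [∀ n, DecidableEq (Ω n)]
    (P : ∀ n, Matrix (Ω n) (Ω n) ℝ) (pi : ∀ n, Ω n → ℝ) : Prop :=
  ∀ ε : ℝ, 0 < ε → ε < 1 →
    Tendsto (fun n => contMix (P n) (pi n) ε / contMix (P n) (pi n) (1 - ε)) atTop (nhds 1)

/-- The sequence of lazy chains exhibits cutoff. -/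
def LazyCutoff {Ω : ℕ → Type} [∀ n, Fintype (Ω n)] [∀ n, DecidableEq (Ω n)]
    (P : ∀ n, Matrix (Ω n) (Ω n) ℝ) (pi : ∀ n, Ω n → ℝ) : Prop :=
  ∀ ε : ℝ, 0 < ε → ε < 1 →
    Tendsto (fun n => (lazyMix (P n) (pi n) ε : ℝ) / (lazyMix (P n) (pi n) (1 - ε) : ℝ))
      atTop (nhds 1)

/-- The sequence of averaged chains exhibits cutoff. -/
def AveCutoff {Ω : ℕ → Type} [∀ n, Fintype (Ω n)] [∀ n, DecidableEq (Ω n)]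
    (P : ∀ n, Matrix (Ω n) (Ω n) ℝ) (pi : ∀ n, Ω n → ℝ) : Prop :=
  ∀ ε : ℝ, 0 < ε → ε < 1 →
    Tendsto (fun n => (aveMix (P n) (pi n) ε : ℝ) / (aveMix (P n) (pi n) (1 - ε) : ℝ))
      atTop (nhds 1)

/-- The sequence of continuous-time chains exhibits cutoff with window `w`. -/
def ContCutoffWindow {Ω : ℕ → Type} [∀ n, Fintype (Ω n)] [∀ n, DecidableEq (Ω n)]
    (P : ∀ n, Matrix (Ω n) (Ω n) ℝ) (pi : ∀ n, Ω n → ℝ) (w : ℕ → ℝ) : Prop :=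
  ContCutoff P pi ∧
  (fun n => w n) =o[atTop] (fun n => contMix (P n) (pi n) (1 / 4)) ∧
  ∀ ε : ℝ, 0 < ε → ε ≤ 1 / 4 → ∃ Cε : ℝ, 0 < Cε ∧
    ∀ n, contMix (P n) (pi n) ε - contMix (P n) (pi n) (1 - ε) ≤ Cε * w n

/-- The sequence of averaged chains exhibits cutoff with window `w`. -/
def AveCutoffWindow {Ω : ℕ → Type} [∀ n, Fintype (Ω n)] [∀ n, DecidableEq (Ω n)]
    (P : ∀ n, Matrix (Ω n) (Ω n) ℝ) (pi : ∀ n, Ω n → ℝ) (w : ℕ → ℝ) : Prop :=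
  AveCutoff P pi ∧
  (fun n => w n) =o[atTop] (fun n => (aveMix (P n) (pi n) (1 / 4) : ℝ)) ∧
  ∀ ε : ℝ, 0 < ε → ε ≤ 1 / 4 → ∃ Cε : ℝ, 0 < Cε ∧
    ∀ n, (aveMix (P n) (pi n) ε : ℝ) - (aveMix (P n) (pi n) (1 - ε) : ℝ) ≤ Cε * w n

/-!
Write `Π` for the kernel with all rows `μ`, so that the distances in question are operator norms
`‖K - Π‖ / 2` on the bounded functions. Both discrete chains are of the form `P ^ k * B`, where `B`
removes the near-periodicity of `P`: `B = (1 + P) / 2` for the averaged chain, and `B = 1` for the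
lazy chain, whose jump matrix is an average already and whose continuous-time version is the
original one slowed down by a factor `2`.

The lower bound is Poisson concentration: `H_t` is the mixture of the `P ^ k` over a number of jumps
`k = t + O(√t)`, and `H_t` differs from `H_t * B` by `O(1 / √t)`, so the chain `P ^ k * B` cannot
be mixed at a time `k < (1 - δ) t` at which `H_t` is not.

For the upper bound let `‖f‖ ≤ 1` have mean zero, let `H_t` be well mixed, and put
`u k = P ^ k * B * f`. By reversibility the squared `L²(μ)` norm of `P ^ k * f` decreases in `k` and
so does its second difference, whence `‖u k - u (k + 1)‖₂ = O(1 / k)`, which is `O(1 / t)` after a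
burn-in of order `δ t`. Mixing of `H_t` forces a spectral gap much larger than `1 / t`, so `‖u k‖₂`
is small as well. Telescoping `u k ^ 2` then shows that `max |u k|` over `O(t)` further times `k` is
small outside a set `A` of small `μ`-measure. Since the continuous-time chain is close to `μ` at
time `t`, the discrete chain can stay in `A` for slightly more than `t` steps only with small
probability; and once it has left `A`, the conditional expectation of the final value is small,
whatever the starting point.
-/

open scoped Matrix.Norms.Operator

section OperatorNorm

variable {m n : Type*} [Fintype m] [Fintype n]

theorem linfty_opNorm_le_iff {A : Matrix m n ℝ} {C : ℝ} (hC : 0 ≤ C) :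
    ‖A‖ ≤ C ↔ ∀ i, ∑ j, |A i j| ≤ C := by
  lift C to NNReal using hC
  rw [linfty_opNorm_def, NNReal.coe_le_coe, Finset.sup_le_iff]
  simp only [Finset.mem_univ, true_implies, ← NNReal.coe_le_coe, NNReal.coe_sum, coe_nnnorm,
    Real.norm_eq_abs]

theorem sum_abs_le_linfty_opNorm (A : Matrix m n ℝ) (i : m) : ∑ j, |A i j| ≤ ‖A‖ :=
  (linfty_opNorm_le_iff (norm_nonneg A)).1 le_rfl i

theorem linfty_opNorm_le_of_forall_mulVec {A : Matrix m n ℝ} {C : ℝ}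
    (h : ∀ f, ‖f‖ ≤ 1 → ‖A *ᵥ f‖ ≤ C) : ‖A‖ ≤ C := by
  have hC : 0 ≤ C := (norm_nonneg _).trans (h 0 (norm_zero.trans_le zero_le_one))
  rw [linfty_opNorm_eq_opNorm]
  exact ContinuousLinearMap.opNorm_le_of_unit_norm hC fun f hf => h f hf.le

end OperatorNorm

section Stochastic

variable {Ω : Type*} [Fintype Ω] {P Q : Matrix Ω Ω ℝ} {f g : Ω → ℝ}

theorem IsStochastic.mulVec_mono (hP : IsStochastic P) (h : f ≤ g) : P *ᵥ f ≤ P *ᵥ g :=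
  fun x => dotProduct_le_dotProduct_of_nonneg_left h (hP.1 x)

theorem IsStochastic.norm_le_one (hP : IsStochastic P) : ‖P‖ ≤ 1 := by
  refine (linfty_opNorm_le_iff zero_le_one).2 fun x => ?_
  simp only [abs_of_nonneg (hP.1 _ _), hP.2, le_refl]

theorem IsStochastic.mulVec_one (hP : IsStochastic P) : P *ᵥ 1 = 1 :=
  funext fun x => (dotProduct_one (P x)).trans (hP.2 x)

theorem isStochastic_iff_mem_rowStochastic [DecidableEq Ω] :
    IsStochastic P ↔ P ∈ rowStochastic ℝ Ω :=
  mem_rowStochastic_iff_sum.symm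

protected theorem IsStochastic.mul (hP : IsStochastic P) (hQ : IsStochastic Q) :
    IsStochastic (P * Q) := by
  classical
  rw [isStochastic_iff_mem_rowStochastic] at *
  exact mul_mem hP hQ

variable [DecidableEq Ω]

namespace IsStochastic

protected theorem one : IsStochastic (1 : Matrix Ω Ω ℝ) :=
  isStochastic_iff_mem_rowStochastic.2 (one_mem _)

protected theorem pow (hP : IsStochastic P) (k : ℕ) : IsStochastic (P ^ k) := by
  rw [isStochastic_iff_mem_rowStochastic] at *
  exact pow_mem hP k

protected theorem lazy (hP : IsStochastic P) : IsStochastic (lazyM P) := by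
  rw [isStochastic_iff_mem_rowStochastic] at *
  rw [lazyM, smul_add]
  exact convex_rowStochastic (one_mem _) hP (by norm_num) (by norm_num) (by norm_num)

theorem norm_pow_le_one (hP : IsStochastic P) (k : ℕ) : ‖P ^ k‖ ≤ 1 :=
  (hP.pow k).norm_le_one

end IsStochastic

end Stochastic

section Poisson

/-- The mass `e^{-t} t ^ k / k!` that the Poisson distribution of mean `t` gives to `k`. It is
defined for every real `t`, so that `heat_hasSum` also covers negative times. -/
noncomputable def poissonWeight (t : ℝ) (k : ℕ) : ℝ :=
  Real.exp (-t) * t ^ k / k.factorial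

theorem poissonWeight_nonneg {t : ℝ} (ht : 0 ≤ t) (k : ℕ) : 0 ≤ poissonWeight t k := by
  unfold poissonWeight
  positivity

theorem abs_poissonWeight_neg {t : ℝ} (ht : 0 ≤ t) (k : ℕ) :
    |poissonWeight (-t) k| = Real.exp (2 * t) * poissonWeight t k := by
  have hexp : Real.exp t = Real.exp (2 * t) * Real.exp (-t) := by
    rw [← Real.exp_add]
    ring_nf
  rw [poissonWeight, poissonWeight, abs_div, abs_mul, abs_pow, abs_neg, abs_of_nonneg ht,
    Real.abs_exp, Nat.abs_cast, neg_neg, hexp]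
  ring

theorem poissonWeight_succ_mul (t : ℝ) (k : ℕ) :
    poissonWeight t (k + 1) * ((k + 1 : ℕ) : ℝ) = t * poissonWeight t k := by
  have : (k + 1 : ℝ) ≠ 0 := k.cast_add_one_ne_zero
  rw [poissonWeight, poissonWeight, Nat.factorial_succ]
  push_cast
  field_simp
  ring

theorem hasSum_poissonWeight (t : ℝ) : HasSum (poissonWeight t) 1 := by
  have h := (NormedSpace.expSeries_div_hasSum_exp t).mul_left (Real.exp (-t))
  rw [← Real.exp_eq_exp_ℝ, ← Real.exp_add, neg_add_cancel, Real.exp_zero] at h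
  exact h.congr_fun fun k => mul_div_assoc _ _ _

variable {E : Type*} [NormedAddCommGroup E] [NormedSpace ℝ E] {t : ℝ}

theorem hasSum_poissonWeight_smul_natCast_smul {a : ℕ → E} {s : E}
    (h : HasSum (fun k => poissonWeight t k • a (k + 1)) s) :
    HasSum (fun k => poissonWeight t k • (k : ℝ) • a k) (t • s) := by
  rw [← hasSum_nat_add_iff' 1]
  simpa only [smul_smul, poissonWeight_succ_mul, Finset.range_one, Finset.sum_singleton,
    Nat.cast_zero, mul_zero, zero_smul, sub_zero] using h.const_smul t

theorem hasSum_poissonWeight_mul_natCast (t : ℝ) :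
    HasSum (fun k : ℕ => poissonWeight t k * k) t := by
  simpa using hasSum_poissonWeight_smul_natCast_smul (t := t) (a := fun _ => (1 : ℝ)) (s := 1)
    (by simpa using hasSum_poissonWeight t)

theorem hasSum_poissonWeight_mul_sq_sub (t : ℝ) :
    HasSum (fun k => poissonWeight t k * (k - t) ^ 2) t := by
  have mean := hasSum_poissonWeight_mul_natCast t
  have second_moment : HasSum (fun k => poissonWeight t k * (k * k)) (t * (t + 1)) :=
    hasSum_poissonWeight_smul_natCast_smul (a := fun k => (k : ℝ))
      (by simpa [mul_add] using mean.add (hasSum_poissonWeight t))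
  have h := (second_moment.sub (mean.mul_left (2 * t))).add
    ((hasSum_poissonWeight t).mul_left (t ^ 2))
  rw [show t * (t + 1) - 2 * t * t + t ^ 2 * 1 = t by ring] at h
  exact h.congr_fun fun k => by ring

theorem hasSum_poissonWeight_mul_add_sq_sub (t A C : ℝ) :
    HasSum (fun k => poissonWeight t k * (A + C * (k - t) ^ 2)) (A + C * t) := by
  have h := ((hasSum_poissonWeight t).mul_left A).add
    ((hasSum_poissonWeight_mul_sq_sub t).mul_left C)
  rw [mul_one] at h
  exact h.congr_fun fun k => by ring

theorem le_of_hasSum_poissonWeight {a : ℕ → ℝ} {s A C : ℝ} (ht : 0 ≤ t)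
    (hs : HasSum (fun k => poissonWeight t k * a k) s)
    (ha : ∀ k : ℕ, a k ≤ A + C * (k - t) ^ 2) : s ≤ A + C * t :=
  hasSum_le (fun k => mul_le_mul_of_nonneg_left (ha k) (poissonWeight_nonneg ht k)) hs
    (hasSum_poissonWeight_mul_add_sq_sub t A C)

theorem norm_le_of_hasSum_poissonWeight {a : ℕ → E} {s : E} {A C : ℝ} (ht : 0 ≤ t)
    (hs : HasSum (fun k => poissonWeight t k • a k) s)
    (ha : ∀ k : ℕ, ‖a k‖ ≤ A + C * (k - t) ^ 2) : ‖s‖ ≤ A + C * t := by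
  refine hs.norm_le_of_bounded (hasSum_poissonWeight_mul_add_sq_sub t A C) fun k => ?_
  rw [norm_smul, Real.norm_of_nonneg (poissonWeight_nonneg ht k)]
  exact mul_le_mul_of_nonneg_left (ha k) (poissonWeight_nonneg ht k)

end Poisson

section Heat

variable {Ω : Type*} [Fintype Ω] [DecidableEq Ω] {P : Matrix Ω Ω ℝ} {t : ℝ}

/-- The transition matrix `H_t = e^{t(P - 1)}` at time `t` of the rate-one continuous-time chain
with jump matrix `P`. -/
noncomputable def heat (P : Matrix Ω Ω ℝ) (t : ℝ) : Matrix Ω Ω ℝ :=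
  NormedSpace.exp (t • (P - 1))

theorem heat_zero (P : Matrix Ω Ω ℝ) : heat P 0 = 1 := by
  rw [heat, zero_smul, NormedSpace.exp_zero]

theorem heat_add (P : Matrix Ω Ω ℝ) (s t : ℝ) : heat P (s + t) = heat P s * heat P t := by
  rw [heat, add_smul]
  exact exp_add_of_commute _ _ (((Commute.refl (P - 1)).smul_left s).smul_right t)

theorem heat_lazyM (P : Matrix Ω Ω ℝ) (t : ℝ) : heat (lazyM P) (2 * t) = heat P t := by
  rw [heat, heat, lazyM]
  congr 1
  module

theorem heat_hasSum (P : Matrix Ω Ω ℝ) (t : ℝ) :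
    HasSum (fun k => poissonWeight t k • P ^ k) (heat P t) := by
  have hexp : heat P t = Real.exp (-t) • NormedSpace.exp (t • P) := by
    have hone : NormedSpace.exp (-(t • (1 : Matrix Ω Ω ℝ))) = Real.exp (-t) • 1 := by
      rw [← neg_smul, ← Algebra.algebraMap_eq_smul_one, ← Algebra.algebraMap_eq_smul_one,
        Real.exp_eq_exp_ℝ]
      exact (NormedSpace.algebraMap_exp_comm (-t)).symm
    rw [heat, smul_sub, sub_eq_add_neg,
      exp_add_of_commute _ _ ((Commute.one_right _).smul_right t).neg_right, hone, mul_smul_comm,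
      mul_one]
  have h := (NormedSpace.exp_series_hasSum_exp' (𝕂 := ℝ) (t • P)).const_smul (Real.exp (-t))
  rw [hexp]
  refine h.congr_fun fun k => ?_
  rw [smul_pow, smul_smul, smul_smul, poissonWeight]
  congr 1
  ring

theorem heat_mulVec_hasSum (P : Matrix Ω Ω ℝ) (t : ℝ) (f : Ω → ℝ) :
    HasSum (fun k => poissonWeight t k • (P ^ k *ᵥ f)) (heat P t *ᵥ f) := by
  have h := (heat_hasSum P t).map (mulVec.addMonoidHomLeft f)
    (continuous_id.matrix_mulVec continuous_const)
  exact h.congr_fun fun k => (smul_mulVec _ _ _).symm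

theorem heat_mulVec_one (hP : IsStochastic P) : heat P t *ᵥ 1 = 1 := by
  have h := heat_mulVec_hasSum P t 1
  simp only [(hP.pow _).mulVec_one] at h
  simpa using h.unique ((hasSum_poissonWeight t).smul_const (1 : Ω → ℝ))

theorem norm_heat_le_one (hP : IsStochastic P) (ht : 0 ≤ t) : ‖heat P t‖ ≤ 1 := by
  simpa using norm_le_of_hasSum_poissonWeight (A := 1) (C := 0) ht (heat_hasSum P t) fun k => by
    simpa using hP.norm_pow_le_one k

theorem norm_heat_neg_le (hP : IsStochastic P) (ht : 0 ≤ t) :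
    ‖heat P (-t)‖ ≤ Real.exp (2 * t) := by
  have h := (hasSum_poissonWeight t).mul_left (Real.exp (2 * t))
  rw [mul_one] at h
  refine (heat_hasSum P (-t)).norm_le_of_bounded h fun k => ?_
  rw [norm_smul, Real.norm_eq_abs, abs_poissonWeight_neg ht]
  exact mul_le_of_le_one_right
    (mul_nonneg (Real.exp_pos _).le (poissonWeight_nonneg ht k)) (hP.norm_pow_le_one k)

end Heat

section Reversible

variable {Ω : Type*} [Fintype Ω] {P : Matrix Ω Ω ℝ} {μ : Ω → ℝ} {f g : Ω → ℝ}

protected theorem IsReversible.abs (hrev : IsReversible P μ) (hμ : ∀ x, 0 ≤ μ x) :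
    IsReversible (P.map (|·|)) μ := fun x y => by
  simp only [map_apply]
  rw [← abs_of_nonneg (hμ x), ← abs_of_nonneg (hμ y), ← abs_mul, ← abs_mul, hrev]

theorem IsReversible.dotProduct_mulVec_mul (hrev : IsReversible P μ) (f g : Ω → ℝ) :
    μ ⬝ᵥ ((P *ᵥ f) * g) = μ ⬝ᵥ (f * (P *ᵥ g)) := by
  simp only [dotProduct, mulVec, Pi.mul_apply, Finset.mul_sum, Finset.sum_mul]
  rw [Finset.sum_comm]
  refine Finset.sum_congr rfl fun x _ => Finset.sum_congr rfl fun y _ => ?_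
  linear_combination f x * g y * hrev y x

theorem IsReversible.dotProduct_mulVec_of_mulVec_one (hrev : IsReversible P μ) (h1 : P *ᵥ 1 = 1)
    (f : Ω → ℝ) : μ ⬝ᵥ (P *ᵥ f) = μ ⬝ᵥ f := by
  simpa [h1] using hrev.dotProduct_mulVec_mul f 1

variable [DecidableEq Ω]

theorem isReversible_iff_semiconjBy : IsReversible P μ ↔ SemiconjBy (diagonal μ) P Pᵀ := by
  simp only [SemiconjBy, ← Matrix.ext_iff, diagonal_mul, mul_diagonal, transpose_apply]
  exact forall₂_congr fun x y => by rw [mul_comm (P y x)]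

namespace IsReversible

protected theorem one : IsReversible (1 : Matrix Ω Ω ℝ) μ := by
  rw [isReversible_iff_semiconjBy, transpose_one]
  exact SemiconjBy.one_right _

protected theorem pow (hrev : IsReversible P μ) (k : ℕ) : IsReversible (P ^ k) μ := by
  rw [isReversible_iff_semiconjBy, transpose_pow]
  exact (isReversible_iff_semiconjBy.1 hrev).pow_right k

protected theorem lazy (hrev : IsReversible P μ) : IsReversible (lazyM P) μ := by
  rw [isReversible_iff_semiconjBy, lazyM, transpose_smul, transpose_add, transpose_one]
  exact ((SemiconjBy.one_right _).add_right (isReversible_iff_semiconjBy.1 hrev)).smul_right _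

protected theorem heat (hrev : IsReversible P μ) (t : ℝ) : IsReversible (heat P t) μ := by
  rw [isReversible_iff_semiconjBy, _root_.heat, ← exp_transpose, transpose_smul, transpose_sub,
    transpose_one]
  exact (((isReversible_iff_semiconjBy.1 hrev).sub_right (SemiconjBy.one_right _)).smul_right
    t).exp_right

theorem dotProduct_pow_mulVec_mul (hrev : IsReversible P μ) (i j : ℕ) (f : Ω → ℝ) :
    μ ⬝ᵥ ((P ^ i *ᵥ f) * (P ^ j *ᵥ f)) = μ ⬝ᵥ (f * (P ^ (i + j) *ᵥ f)) := by
  rw [(hrev.pow i).dotProduct_mulVec_mul, mulVec_mulVec, pow_add]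

end IsReversible

end Reversible

section L2

variable {Ω : Type*} [Fintype Ω] {K : Matrix Ω Ω ℝ} {μ : Ω → ℝ} {f g : Ω → ℝ}

/-- The seminorm of `L²(μ)` for a weight `μ` on a finite set, realised as the Euclidean norm of
`√μ • f`. -/
noncomputable def l2Seminorm (μ : Ω → ℝ) : Seminorm ℝ (Ω → ℝ) :=
  (normSeminorm ℝ (EuclideanSpace ℝ Ω)).comp
    ((WithLp.linearEquiv 2 ℝ (Ω → ℝ)).symm.toLinearMap ∘ₗ
      LinearMap.mulLeft ℝ (fun x => √(μ x)))

theorem l2Seminorm_apply (μ f : Ω → ℝ) :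
    l2Seminorm μ f = ‖WithLp.toLp 2 (fun x => √(μ x) * f x)‖ :=
  rfl

theorem l2Seminorm_sq (hμ : ∀ x, 0 ≤ μ x) (f : Ω → ℝ) : l2Seminorm μ f ^ 2 = μ ⬝ᵥ (f * f) := by
  rw [l2Seminorm_apply, EuclideanSpace.real_norm_sq_eq]
  refine Finset.sum_congr rfl fun x _ => ?_
  rw [mul_pow, Real.sq_sqrt (hμ x), Pi.mul_apply, sq]

theorem l2Seminorm_sub_sq (hμ : ∀ x, 0 ≤ μ x) (f g : Ω → ℝ) :
    l2Seminorm μ (f - g) ^ 2 = l2Seminorm μ f ^ 2 - 2 * (μ ⬝ᵥ (f * g)) + l2Seminorm μ g ^ 2 := by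
  rw [l2Seminorm_sq hμ, l2Seminorm_sq hμ, l2Seminorm_sq hμ,
    show (f - g) * (f - g) = f * f - (2 : ℝ) • (f * g) + g * g by rw [two_smul]; ring,
    dotProduct_add, dotProduct_sub, dotProduct_smul, smul_eq_mul]

theorem l2Seminorm_abs (hμ : ∀ x, 0 ≤ μ x) (f : Ω → ℝ) : l2Seminorm μ |f| = l2Seminorm μ f := by
  rw [← sq_eq_sq₀ (apply_nonneg _ _) (apply_nonneg _ _), l2Seminorm_sq hμ, l2Seminorm_sq hμ]
  exact congrArg (μ ⬝ᵥ ·) (funext fun x => abs_mul_abs_self (f x))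

theorem dotProduct_mul_le_l2Seminorm_mul (hμ : ∀ x, 0 ≤ μ x) (f g : Ω → ℝ) :
    μ ⬝ᵥ (f * g) ≤ l2Seminorm μ f * l2Seminorm μ g := by
  refine le_trans (le_of_eq ?_) (real_inner_le_norm (WithLp.toLp 2 (fun x => √(μ x) * f x))
    (WithLp.toLp 2 (fun x => √(μ x) * g x)))
  simp only [PiLp.inner_apply, dotProduct, Pi.mul_apply, RCLike.inner_apply, conj_trivial]
  refine Finset.sum_congr rfl fun x _ => ?_
  linear_combination -(f x * g x) * Real.mul_self_sqrt (hμ x)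

theorem dotProduct_abs_mul_le_l2Seminorm_mul (hμ : ∀ x, 0 ≤ μ x) (f g : Ω → ℝ) :
    μ ⬝ᵥ |f * g| ≤ l2Seminorm μ f * l2Seminorm μ g := by
  rw [show |f * g| = |f| * |g| from funext fun x => abs_mul (f x) (g x), ← l2Seminorm_abs hμ f,
    ← l2Seminorm_abs hμ g]
  exact dotProduct_mul_le_l2Seminorm_mul hμ _ _

theorem IsProbVec.dotProduct_one_eq_one (hμ : IsProbVec μ) : μ ⬝ᵥ 1 = 1 := by
  rw [dotProduct_one, hμ.2]

theorem l2Seminorm_le_norm (hμ : IsProbVec μ) (f : Ω → ℝ) : l2Seminorm μ f ≤ ‖f‖ := by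
  refine (sq_le_sq₀ (apply_nonneg _ _) (norm_nonneg f)).1 ?_
  calc l2Seminorm μ f ^ 2 = μ ⬝ᵥ (f * f) := l2Seminorm_sq hμ.1 f
    _ ≤ μ ⬝ᵥ (‖f‖ ^ 2 • 1) := dotProduct_le_dotProduct_of_nonneg_left (fun x => by
        simpa [← sq] using sq_le_sq' (neg_le_of_abs_le (norm_le_pi_norm f x))
          (le_of_abs_le (norm_le_pi_norm f x))) hμ.1
    _ = ‖f‖ ^ 2 := by rw [dotProduct_smul, hμ.dotProduct_one_eq_one, smul_eq_mul, mul_one]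

theorem l2Seminorm_le_of_hasSum {ι : Type*} {a : ι → Ω → ℝ} {b : ι → ℝ} {C : ℝ}
    (ha : HasSum a f) (hb : HasSum b C) (hab : ∀ i, l2Seminorm μ (a i) ≤ b i) :
    l2Seminorm μ f ≤ C := by
  have h := ha.map ((WithLp.linearEquiv 2 ℝ (Ω → ℝ)).symm.toLinearMap ∘ₗ
    LinearMap.mulLeft ℝ fun x => √(μ x)) (LinearMap.continuous_of_finiteDimensional _)
  exact h.norm_le_of_bounded hb hab

theorem mulVec_mul_self_le (K : Matrix Ω Ω ℝ) (f : Ω → ℝ) :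
    (K *ᵥ f) * (K *ᵥ f) ≤ ‖K‖ • (K.map (|·|) *ᵥ (f * f)) := fun x => by
  have hCS := Finset.sum_sq_le_sum_mul_sum_of_sq_le_mul Finset.univ
    (r := fun y => K x y * f y) (f := fun y => |K x y|) (g := fun y => |K x y| * (f y * f y))
    (fun y _ => abs_nonneg _) (fun y _ => mul_nonneg (abs_nonneg _) (mul_self_nonneg _))
    (fun y _ => le_of_eq (by rw [mul_pow, ← sq_abs (K x y)]; ring))
  have hnn : 0 ≤ ∑ y, |K x y| * (f y * f y) :=
    Finset.sum_nonneg fun y _ => mul_nonneg (abs_nonneg _) (mul_self_nonneg _)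
  calc (K *ᵥ f) x * (K *ᵥ f) x = (∑ y, K x y * f y) ^ 2 := (sq _).symm
    _ ≤ (∑ y, |K x y|) * ∑ y, |K x y| * (f y * f y) := hCS
    _ ≤ ‖K‖ * ∑ y, |K x y| * (f y * f y) :=
        mul_le_mul_of_nonneg_right (sum_abs_le_linfty_opNorm K x) hnn

/-- Schur's test; the weight is moved onto the row sums by reversibility. -/
theorem IsReversible.l2Seminorm_mulVec_le (hrev : IsReversible K μ) (hμ : ∀ x, 0 ≤ μ x)
    (f : Ω → ℝ) : l2Seminorm μ (K *ᵥ f) ≤ ‖K‖ * l2Seminorm μ f := by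
  have hrow : K.map (|·|) *ᵥ 1 ≤ ‖K‖ • 1 := fun x => by
    simpa [mulVec, dotProduct_one] using sum_abs_le_linfty_opNorm K x
  have hff : 0 ≤ f * f := fun x => mul_self_nonneg (f x)
  refine (sq_le_sq₀ (apply_nonneg _ _) (mul_nonneg (norm_nonneg K) (apply_nonneg _ _))).1 ?_
  calc l2Seminorm μ (K *ᵥ f) ^ 2
      = μ ⬝ᵥ ((K *ᵥ f) * (K *ᵥ f)) := l2Seminorm_sq hμ _
    _ ≤ μ ⬝ᵥ (‖K‖ • (K.map (|·|) *ᵥ (f * f))) :=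
        dotProduct_le_dotProduct_of_nonneg_left (mulVec_mul_self_le K f) hμ
    _ = ‖K‖ * (μ ⬝ᵥ ((f * f) * (K.map (|·|) *ᵥ 1))) := by
        rw [dotProduct_smul, smul_eq_mul, ← (hrev.abs hμ).dotProduct_mulVec_mul, mul_one]
    _ ≤ ‖K‖ * (μ ⬝ᵥ ((f * f) * (‖K‖ • 1))) :=
        mul_le_mul_of_nonneg_left (dotProduct_le_dotProduct_of_nonneg_left
          (mul_le_mul_of_nonneg_left hrow hff) hμ) (norm_nonneg K)
    _ = (‖K‖ * l2Seminorm μ f) ^ 2 := by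
        rw [mul_smul_comm, mul_one, dotProduct_smul, smul_eq_mul, mul_pow, l2Seminorm_sq hμ]
        ring

theorem IsReversible.l2Seminorm_mulVec_le_of_isStochastic (hrev : IsReversible K μ)
    (hμ : ∀ x, 0 ≤ μ x) (hK : IsStochastic K) (f : Ω → ℝ) :
    l2Seminorm μ (K *ᵥ f) ≤ l2Seminorm μ f :=
  (hrev.l2Seminorm_mulVec_le hμ f).trans (mul_le_of_le_one_left (apply_nonneg _ _) hK.norm_le_one)

end L2

section Smoothing

theorem mul_secondDifference_le_of_antitone {a : ℕ → ℝ} (ha : ∀ k, 0 ≤ a k) (hanti : Antitone a)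
    (hconv : Antitone fun k => a k - 2 * a (k + 1) + a (k + 2)) (k : ℕ) :
    k * (k + 1) * (a k - 2 * a (k + 1) + a (k + 2)) ≤ 2 * a 0 := by
  set c := a k - 2 * a (k + 1) + a (k + 2)
  have key : ∀ i j, i + j = k → i * c ≤ a j - a (j + 1) ∧ i * (i + 1) * c ≤ 2 * a j := by
    intro i
    induction i with
    | zero => exact fun j _ => by simpa using ⟨hanti j.le_succ, ha j⟩
    | succ i ih =>
      intro j hj
      obtain ⟨hdiff, hval⟩ := ih (j + 1) (by omega)
      have hcj : c ≤ a j - 2 * a (j + 1) + a (j + 2) := hconv (show j ≤ k by omega)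
      push_cast
      constructor <;> linarith
  exact (key k 0 (add_zero k)).2

variable {Ω : Type*} [Fintype Ω] [DecidableEq Ω] {P : Matrix Ω Ω ℝ} {μ : Ω → ℝ}

theorem IsReversible.antitone_l2Seminorm_pow_mulVec (hrev : IsReversible P μ)
    (hμ : ∀ x, 0 ≤ μ x) (hP : IsStochastic P) (f : Ω → ℝ) :
    Antitone fun k => l2Seminorm μ (P ^ k *ᵥ f) := by
  refine antitone_nat_of_succ_le fun k => ?_
  rw [pow_succ', ← mulVec_mulVec]
  exact hrev.l2Seminorm_mulVec_le_of_isStochastic hμ hP _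

theorem IsReversible.mul_l2Seminorm_pow_mulVec_sub_le (hrev : IsReversible P μ)
    (hμ : ∀ x, 0 ≤ μ x) (hP : IsStochastic P) (k : ℕ) (f : Ω → ℝ) :
    k * l2Seminorm μ (P ^ k *ᵥ (f - P ^ 2 *ᵥ f)) ≤ 2 * l2Seminorm μ f := by
  set a : ℕ → ℝ := fun k => l2Seminorm μ (P ^ k *ᵥ f) ^ 2
  have antitone_sq (g : Ω → ℝ) : Antitone fun k => l2Seminorm μ (P ^ k *ᵥ g) ^ 2 :=
    fun i j hij => pow_le_pow_left₀ (apply_nonneg _ _)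
      (hrev.antitone_l2Seminorm_pow_mulVec hμ hP g hij) 2
  have hdiff : ∀ k, l2Seminorm μ (P ^ k *ᵥ (f - P ^ 2 *ᵥ f)) ^ 2 =
      a k - 2 * a (k + 1) + a (k + 2) := fun k => by
    simp only [a]
    rw [mulVec_sub, mulVec_mulVec, ← pow_add, l2Seminorm_sub_sq hμ,
      hrev.dotProduct_pow_mulVec_mul, l2Seminorm_sq hμ (P ^ (k + 1) *ᵥ f),
      hrev.dotProduct_pow_mulVec_mul, show k + (k + 2) = k + 1 + (k + 1) by ring]
  have hbound := mul_secondDifference_le_of_antitone (fun k => sq_nonneg _) (antitone_sq f)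
    (funext hdiff ▸ antitone_sq (f - P ^ 2 *ᵥ f)) k
  rw [← hdiff, pow_zero, one_mulVec] at hbound
  refine (sq_le_sq₀ (by positivity) (by positivity)).1 ?_
  nlinarith [sq_nonneg (l2Seminorm μ (P ^ k *ᵥ (f - P ^ 2 *ᵥ f))), k.cast_nonneg (α := ℝ),
    sq_nonneg (l2Seminorm μ f)]

theorem lazyM_mulVec (P : Matrix Ω Ω ℝ) (f : Ω → ℝ) :
    lazyM P *ᵥ f = (2 : ℝ)⁻¹ • (f + P *ᵥ f) := by
  rw [lazyM, smul_mulVec, add_mulVec, one_mulVec]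

theorem IsReversible.l2Seminorm_le_add_lazyM_mulVec (hrev : IsReversible P μ)
    (hμ : ∀ x, 0 ≤ μ x) (hP : IsStochastic P) (f : Ω → ℝ) :
    l2Seminorm μ f ≤ l2Seminorm μ (f + lazyM P *ᵥ f) := by
  have hsplit : (3 : ℝ) • f = (2 : ℝ) • (f + lazyM P *ᵥ f) - P *ᵥ f := by
    rw [lazyM_mulVec]
    module
  have htri := map_sub_le_add (l2Seminorm μ) ((2 : ℝ) • (f + lazyM P *ᵥ f)) (P *ᵥ f)
  rw [← hsplit, map_smul_eq_mul, map_smul_eq_mul, Real.norm_ofNat, Real.norm_ofNat] at htri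
  linarith [hrev.l2Seminorm_mulVec_le_of_isStochastic hμ hP f]

end Smoothing

section Regularizing

variable {Ω : Type*} [Fintype Ω] [DecidableEq Ω] {P B : Matrix Ω Ω ℝ} {μ : Ω → ℝ} {t : ℝ}

theorem norm_heat_mul_one_sub_le (hP : IsStochastic P) (ht : 0 < t) :
    ‖heat P t * (1 - P)‖ ≤ (√t)⁻¹ := by
  have hshift : HasSum (fun k => poissonWeight t k • P ^ (k + 1)) (heat P t * P) := by
    simpa only [smul_mul_assoc, ← pow_succ] using (heat_hasSum P t).mul_right P
  have hsize := (hasSum_poissonWeight_smul_natCast_smul hshift).const_smul t⁻¹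
  rw [inv_smul_smul₀ ht.ne'] at hsize
  have hsum : HasSum (fun k : ℕ => poissonWeight t k • (1 - t⁻¹ * k) • P ^ k)
      (heat P t * (1 - P)) := by
    rw [mul_sub, mul_one]
    exact ((heat_hasSum P t).sub hsize).congr_fun fun k => by module
  have : 0 < √t := Real.sqrt_pos.2 ht
  have hst : √t ^ 2 = t := Real.sq_sqrt ht.le
  have hbound : ∀ k : ℕ, ‖(1 - t⁻¹ * k) • P ^ k‖ ≤
      (√t)⁻¹ / 2 + (√t)⁻¹ / (2 * t) * (k - t) ^ 2 := fun k => by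
    calc ‖(1 - t⁻¹ * k) • P ^ k‖ ≤ |1 - t⁻¹ * k| := by
          rw [norm_smul]
          exact mul_le_of_le_one_right (norm_nonneg _) (hP.norm_pow_le_one k)
      _ = √t * |k - t| * ((√t)⁻¹ / t) := by
          rw [show 1 - t⁻¹ * k = -(k - t) / t by field_simp; ring, abs_div, abs_neg,
            abs_of_pos ht]
          field_simp
      _ ≤ (t + (k - t) ^ 2) / 2 * ((√t)⁻¹ / t) := by
          gcongr
          nlinarith [sq_nonneg (√t - |(k : ℝ) - t|), sq_abs ((k : ℝ) - t)]
      _ = (√t)⁻¹ / 2 + (√t)⁻¹ / (2 * t) * (k - t) ^ 2 := by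
          field_simp
  refine (norm_le_of_hasSum_poissonWeight ht.le hsum hbound).trans_eq ?_
  field_simp
  ring

/-- A smoothing kernel `B` for the discrete chain `(P, μ)`: appending one step of `B` makes the
increments of `k ↦ P ^ k * B` small in `L²(μ)`, i.e. it removes the near-periodicity of `P`, and it
barely changes the continuous-time chain. Both the averaged chain (`B = (1 + P)/2`) and the lazy
chain (`B = 1`) are of this form. -/
structure IsRegularizing (P B : Matrix Ω Ω ℝ) (μ : Ω → ℝ) : Prop where
  isStochastic : IsStochastic B
  isReversible : IsReversible B μ
  mul_l2Seminorm_le (k : ℕ) (f : Ω → ℝ) :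
    k * l2Seminorm μ ((P ^ k * B - P ^ (k + 1) * B) *ᵥ f) ≤ 2 * l2Seminorm μ f
  norm_heat_mul_one_sub_le {t : ℝ} (ht : 0 < t) : ‖heat P t * (1 - B)‖ ≤ (√t)⁻¹

theorem isRegularizing_lazyM (hμ : ∀ x, 0 ≤ μ x) (hP : IsStochastic P)
    (hrev : IsReversible P μ) : IsRegularizing P (lazyM P) μ where
  isStochastic := hP.lazy
  isReversible := hrev.lazy
  mul_l2Seminorm_le k f := by
    have hB : (P ^ k * lazyM P - P ^ (k + 1) * lazyM P) *ᵥ f =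
        (2 : ℝ)⁻¹ • (P ^ k *ᵥ (f - P ^ 2 *ᵥ f)) := by
      rw [mulVec_sub, mulVec_mulVec, ← sub_mulVec, ← smul_mulVec, lazyM]
      congr 1
      simp only [mul_smul_comm, mul_add, mul_one, ← pow_succ, ← pow_add]
      module
    rw [hB, map_smul_eq_mul, norm_inv, Real.norm_ofNat]
    linarith [hrev.mul_l2Seminorm_pow_mulVec_sub_le hμ hP k f, apply_nonneg (l2Seminorm μ) f]
  norm_heat_mul_one_sub_le {t} ht := by
    have hB : heat P t * (1 - lazyM P) = (2 : ℝ)⁻¹ • (heat P t * (1 - P)) := by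
      rw [← mul_smul_comm, lazyM]
      congr 1
      module
    rw [hB, norm_smul, norm_inv, Real.norm_ofNat]
    linarith [norm_heat_mul_one_sub_le hP ht, norm_nonneg (heat P t * (1 - P))]

theorem isRegularizing_one (hμ : ∀ x, 0 ≤ μ x) (hP : IsStochastic P)
    (hrev : IsReversible P μ) : IsRegularizing (lazyM P) 1 μ where
  isStochastic := .one
  isReversible := .one
  mul_l2Seminorm_le k f := by
    set Q := lazyM P
    have hQ : Q ^ k *ᵥ (f - Q ^ 2 *ᵥ f) =
        (Q ^ k - Q ^ (k + 1)) *ᵥ f + Q *ᵥ ((Q ^ k - Q ^ (k + 1)) *ᵥ f) := by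
      rw [mulVec_sub, mulVec_mulVec, mulVec_mulVec, ← sub_mulVec, ← add_mulVec]
      congr 1
      simp only [mul_sub, ← pow_succ', ← pow_add]
      abel
    rw [mul_one, mul_one]
    refine le_trans (mul_le_mul_of_nonneg_left ?_ k.cast_nonneg)
      (hrev.lazy.mul_l2Seminorm_pow_mulVec_sub_le hμ hP.lazy k f)
    rw [hQ]
    exact hrev.l2Seminorm_le_add_lazyM_mulVec hμ hP _
  norm_heat_mul_one_sub_le {t} _ := by
    rw [sub_self, mul_zero, norm_zero]
    positivity

end Regularizing

section StationaryKernel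

variable {Ω : Type*} {K M : Matrix Ω Ω ℝ} {μ : Ω → ℝ}

/-- The kernel all of whose rows are `μ`; as an operator it is the projection of a function onto
its `μ`-mean. A chain has mixed when its kernel is close to this one. -/
def stationaryKernel (μ : Ω → ℝ) : Matrix Ω Ω ℝ :=
  vecMulVec 1 μ

theorem stationaryKernel_apply (μ : Ω → ℝ) (x y : Ω) : stationaryKernel μ x y = μ y :=
  one_mul (μ y)

variable [Fintype Ω]

theorem stationaryKernel_mulVec (μ f : Ω → ℝ) : stationaryKernel μ *ᵥ f = (μ ⬝ᵥ f) • 1 := by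
  rw [stationaryKernel, vecMulVec_mulVec, op_smul_eq_smul]

theorem mul_stationaryKernel (h1 : K *ᵥ 1 = 1) : K * stationaryKernel μ = stationaryKernel μ := by
  rw [stationaryKernel, mul_vecMulVec, h1]

theorem IsProbVec.isStochastic_stationaryKernel (hμ : IsProbVec μ) :
    IsStochastic (stationaryKernel μ) := by
  simpa only [IsStochastic, stationaryKernel_apply] using ⟨fun _ => hμ.1, fun _ => hμ.2⟩

theorem IsReversible.sub_stationaryKernel (hrev : IsReversible K μ) :
    IsReversible (K - stationaryKernel μ) μ := fun x y => by
  rw [Matrix.sub_apply, Matrix.sub_apply, stationaryKernel_apply, stationaryKernel_apply, mul_sub,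
    mul_sub, hrev x y, mul_comm (μ x) (μ y)]

theorem IsStochastic.norm_sub_stationaryKernel_le_two (hK : IsStochastic K) (hμ : IsProbVec μ) :
    ‖K - stationaryKernel μ‖ ≤ 2 :=
  (norm_sub_le _ _).trans (by
    linarith [hK.norm_le_one, hμ.isStochastic_stationaryKernel.norm_le_one])

theorem norm_mul_sub_stationaryKernel_le (h1 : M *ᵥ 1 = 1) :
    ‖M * K - stationaryKernel μ‖ ≤ ‖M‖ * ‖K - stationaryKernel μ‖ := by
  rw [← mul_stationaryKernel h1, ← mul_sub, mul_stationaryKernel h1]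
  exact norm_mul_le M (K - stationaryKernel μ)

theorem iSup_tvDist_eq_norm_sub_div_two (K : Matrix Ω Ω ℝ) (μ : Ω → ℝ) :
    ⨆ x, tvDist (K x) μ = ‖K - stationaryKernel μ‖ / 2 := by
  have tvDist_row : ∀ x, tvDist (K x) μ = (∑ y, |(K - stationaryKernel μ) x y|) / 2 := fun x => by
    simp only [tvDist, Matrix.sub_apply, stationaryKernel_apply]
  have tvDist_nonneg : ∀ x, 0 ≤ tvDist (K x) μ := fun x => by
    unfold tvDist
    positivity
  apply le_antisymm
  · refine Real.iSup_le (fun x => ?_) (by positivity)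
    rw [tvDist_row]
    linarith [sum_abs_le_linfty_opNorm (K - stationaryKernel μ) x]
  · rw [div_le_iff₀ two_pos, linfty_opNorm_le_iff (by
      linarith [Real.iSup_nonneg tvDist_nonneg])]
    intro x
    rw [← div_le_iff₀ two_pos, ← tvDist_row]
    exact le_ciSup (f := fun x => tvDist (K x) μ) (Set.finite_range _).bddAbove x

variable [DecidableEq Ω] {P B : Matrix Ω Ω ℝ}

theorem antitone_norm_pow_mul_sub_stationaryKernel (hP : IsStochastic P) (B : Matrix Ω Ω ℝ)
    (μ : Ω → ℝ) : Antitone fun k => ‖P ^ k * B - stationaryKernel μ‖ := by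
  refine antitone_nat_of_succ_le fun k => ?_
  rw [pow_succ', mul_assoc]
  exact (norm_mul_sub_stationaryKernel_le hP.mulVec_one).trans
    (mul_le_of_le_one_left (norm_nonneg _) hP.norm_le_one)

theorem antitoneOn_norm_heat_sub_stationaryKernel (hP : IsStochastic P) (μ : Ω → ℝ) :
    AntitoneOn (fun t => ‖heat P t - stationaryKernel μ‖) (Set.Ici 0) := fun s _ t _ hst => by
  have hheat := norm_mul_sub_stationaryKernel_le (K := heat P s) (μ := μ)
    (heat_mulVec_one (t := t - s) hP)
  rw [← heat_add, sub_add_cancel] at hheat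
  exact hheat.trans
    (mul_le_of_le_one_left (norm_nonneg _) (norm_heat_le_one hP (sub_nonneg.2 hst)))

theorem norm_one_sub_stationaryKernel_le (hP : IsStochastic P) {t : ℝ} (ht : 0 ≤ t) :
    ‖1 - stationaryKernel μ‖ ≤ Real.exp (2 * t) * ‖heat P t - stationaryKernel μ‖ := by
  have hheat := norm_mul_sub_stationaryKernel_le (K := heat P t) (μ := μ)
    (heat_mulVec_one (t := -t) hP)
  rw [← heat_add, neg_add_cancel, heat_zero] at hheat
  exact hheat.trans (mul_le_mul_of_nonneg_right (norm_heat_neg_le hP ht) (norm_nonneg _))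

end StationaryKernel

section Poincare

variable {Ω : Type*} [Fintype Ω] [DecidableEq Ω] {P : Matrix Ω Ω ℝ} {μ g : Ω → ℝ} {s t : ℝ}

theorem IsReversible.l2Seminorm_mulVec_le_norm_sub_stationaryKernel_mul {K : Matrix Ω Ω ℝ}
    (hrev : IsReversible K μ) (hμ : ∀ x, 0 ≤ μ x) (hg : μ ⬝ᵥ g = 0) :
    l2Seminorm μ (K *ᵥ g) ≤ ‖K - stationaryKernel μ‖ * l2Seminorm μ g := by
  have hK : (K - stationaryKernel μ) *ᵥ g = K *ᵥ g := by
    rw [sub_mulVec, stationaryKernel_mulVec, hg, zero_smul, sub_zero]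
  simpa only [hK] using hrev.sub_stationaryKernel.l2Seminorm_mulVec_le hμ g

theorem IsReversible.l2Seminorm_heat_half_mulVec_sq_le (hrev : IsReversible P μ)
    (hμ : ∀ x, 0 ≤ μ x) (s : ℝ) (g : Ω → ℝ) :
    l2Seminorm μ (heat P (s / 2) *ᵥ g) ^ 2 ≤ l2Seminorm μ g * l2Seminorm μ (heat P s *ᵥ g) := by
  rw [l2Seminorm_sq hμ, (hrev.heat _).dotProduct_mulVec_mul, mulVec_mulVec, ← heat_add, add_halves]
  exact dotProduct_mul_le_l2Seminorm_mul hμ _ _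

theorem IsReversible.l2Seminorm_heat_div_two_pow_mulVec_le (hrev : IsReversible P μ)
    (hμ : ∀ x, 0 ≤ μ x) {c : ℝ} (hc : 0 ≤ c) (j : ℕ) (s : ℝ)
    (hs : l2Seminorm μ (heat P s *ᵥ g) ≤ c ^ 2 ^ j * l2Seminorm μ g) :
    l2Seminorm μ (heat P (s / 2 ^ j) *ᵥ g) ≤ c * l2Seminorm μ g := by
  induction j generalizing s with
  | zero => simpa using hs
  | succ j ih =>
    have hhalf : l2Seminorm μ (heat P (s / 2) *ᵥ g) ≤ c ^ 2 ^ j * l2Seminorm μ g := by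
      refine (sq_le_sq₀ (apply_nonneg _ _) (by positivity)).1 ?_
      calc l2Seminorm μ (heat P (s / 2) *ᵥ g) ^ 2
          ≤ l2Seminorm μ g * l2Seminorm μ (heat P s *ᵥ g) :=
            hrev.l2Seminorm_heat_half_mulVec_sq_le hμ s g
        _ ≤ l2Seminorm μ g * (c ^ 2 ^ (j + 1) * l2Seminorm μ g) := by gcongr
        _ = (c ^ 2 ^ j * l2Seminorm μ g) ^ 2 := by rw [pow_succ 2 j, pow_mul]; ring
    rw [pow_succ', ← div_div]
    exact ih (s / 2) hhalf

theorem IsReversible.l2Seminorm_sub_pow_mulVec_le (hrev : IsReversible P μ)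
    (hμ : ∀ x, 0 ≤ μ x) (hP : IsStochastic P) (k : ℕ) (g : Ω → ℝ) :
    l2Seminorm μ (g - P ^ k *ᵥ g) ≤ k * l2Seminorm μ (g - P *ᵥ g) := by
  induction k with
  | zero => simp
  | succ k ih =>
    have hsplit : g - P ^ (k + 1) *ᵥ g = (g - P ^ k *ᵥ g) + P ^ k *ᵥ (g - P *ᵥ g) := by
      rw [mulVec_sub, mulVec_mulVec, ← pow_succ]
      abel
    have hstep := hrev.antitone_l2Seminorm_pow_mulVec hμ hP (g - P *ᵥ g) k.zero_le
    simp only [pow_zero, one_mulVec] at hstep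
    rw [hsplit]
    push_cast
    linarith [map_add_le_add (l2Seminorm μ) (g - P ^ k *ᵥ g) (P ^ k *ᵥ (g - P *ᵥ g))]

theorem IsReversible.l2Seminorm_sub_heat_mulVec_le (hrev : IsReversible P μ)
    (hμ : ∀ x, 0 ≤ μ x) (hP : IsStochastic P) (hs : 0 ≤ s) (g : Ω → ℝ) :
    l2Seminorm μ (g - heat P s *ᵥ g) ≤ s * l2Seminorm μ (g - P *ᵥ g) := by
  have hsum : HasSum (fun k => poissonWeight s k • (g - P ^ k *ᵥ g)) (g - heat P s *ᵥ g) := by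
    have h := ((hasSum_poissonWeight s).smul_const g).sub (heat_mulVec_hasSum P s g)
    rw [one_smul] at h
    exact h.congr_fun fun k => smul_sub _ _ _
  refine l2Seminorm_le_of_hasSum hsum ((hasSum_poissonWeight_mul_natCast s).mul_right _) fun k => ?_
  rw [map_smul_eq_mul, Real.norm_of_nonneg (poissonWeight_nonneg hs k), mul_assoc]
  exact mul_le_mul_of_nonneg_left (hrev.l2Seminorm_sub_pow_mulVec_le hμ hP k g)
    (poissonWeight_nonneg hs k)

theorem IsReversible.two_pow_mul_l2Seminorm_le (hrev : IsReversible P μ) (hμ : ∀ x, 0 ≤ μ x)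
    (hP : IsStochastic P) (ht : 0 ≤ t) {j : ℕ}
    (hmix : ‖heat P t - stationaryKernel μ‖ ≤ (1 / 2) ^ 2 ^ j) (hg : μ ⬝ᵥ g = 0) :
    2 ^ j * l2Seminorm μ g ≤ 2 * t * l2Seminorm μ (g - P *ᵥ g) := by
  have hcontract := hrev.l2Seminorm_heat_div_two_pow_mulVec_le hμ one_half_pos.le j t
    (((hrev.heat t).l2Seminorm_mulVec_le_norm_sub_stationaryKernel_mul hμ hg).trans
      (mul_le_mul_of_nonneg_right hmix (apply_nonneg _ _)))
  have hmove := hrev.l2Seminorm_sub_heat_mulVec_le hμ hP (s := t / 2 ^ j) (by positivity) g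
  have htri := map_add_le_add (l2Seminorm μ) (g - heat P (t / 2 ^ j) *ᵥ g)
    (heat P (t / 2 ^ j) *ᵥ g)
  rw [sub_add_cancel] at htri
  calc 2 ^ j * l2Seminorm μ g ≤ 2 ^ j * (2 * (t / 2 ^ j * l2Seminorm μ (g - P *ᵥ g))) := by
        gcongr
        linarith
    _ = 2 * t * l2Seminorm μ (g - P *ᵥ g) := by field_simp

end Poincare

section Confinement

variable {Ω : Type*} [Fintype Ω] {P : Matrix Ω Ω ℝ} {A : Set Ω} {t : ℝ}

theorem IsStochastic.abs_mulVec_le (hP : IsStochastic P) (f : Ω → ℝ) : |P *ᵥ f| ≤ P *ᵥ |f| :=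
  abs_le'.2 ⟨hP.mulVec_mono (le_abs_self f), by
    rw [← mulVec_neg]
    exact hP.mulVec_mono (neg_le_abs f)⟩

/-- `stayProb P A m x` is the probability that the chain with transition matrix `P` started from
`x` stays in `A` during the times `0, …, m`. -/
noncomputable def stayProb (P : Matrix Ω Ω ℝ) (A : Set Ω) : ℕ → Ω → ℝ
  | 0 => A.indicator 1
  | m + 1 => A.indicator (P *ᵥ stayProb P A m)

theorem stayProb_of_notMem {x : Ω} (hx : x ∉ A) (m : ℕ) : stayProb P A m x = 0 := by
  cases m <;> exact Set.indicator_of_notMem hx _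

theorem stayProb_nonneg (hP : IsStochastic P) (A : Set Ω) (m : ℕ) : 0 ≤ stayProb P A m := by
  induction m with
  | zero => exact Set.indicator_nonneg fun _ _ => zero_le_one
  | succ m ih =>
    have h := hP.mulVec_mono ih
    rw [mulVec_zero] at h
    exact Set.indicator_nonneg fun x _ => h x

theorem antitone_stayProb (hP : IsStochastic P) (A : Set Ω) : Antitone (stayProb P A) := by
  refine antitone_nat_of_succ_le fun m => ?_
  induction m with
  | zero =>
    have h : stayProb P A 0 ≤ 1 := Set.indicator_le_self' fun _ _ => zero_le_one
    have hstep := hP.mulVec_mono h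
    rw [hP.mulVec_one] at hstep
    exact fun x => Set.indicator_le_indicator (hstep x)
  | succ m ih => exact fun x => Set.indicator_le_indicator (hP.mulVec_mono ih x)

variable [DecidableEq Ω]

theorem stayProb_le_pow_mulVec (hP : IsStochastic P) (A : Set Ω) (m : ℕ) :
    stayProb P A m ≤ P ^ m *ᵥ A.indicator 1 := by
  induction m with
  | zero => rw [pow_zero, one_mulVec, stayProb]
  | succ m ih =>
    have hnonneg := hP.mulVec_mono (stayProb_nonneg hP A m)
    rw [mulVec_zero] at hnonneg
    rw [pow_succ', ← mulVec_mulVec]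
    exact (Set.indicator_le_self' fun x _ => hnonneg x).trans (hP.mulVec_mono ih)

/-- The number of jumps of the continuous-time chain up to time `t` exceeds `m` with probability at
most `t / (m - t) ^ 2`, by Chebyshev's inequality. -/
theorem stayProb_mul_le_heat_mulVec (hP : IsStochastic P) (A : Set Ω) (ht : 0 ≤ t) {m : ℕ}
    (htm : t < m) (x : Ω) :
    stayProb P A m x * (1 - t / (m - t) ^ 2) ≤ (heat P t *ᵥ A.indicator 1) x := by
  set S := stayProb P A m x
  have hS : 0 ≤ S := stayProb_nonneg hP A m x
  have : 0 < (m : ℝ) - t := sub_pos.2 htm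
  have hsum := (Pi.hasSum.1 (heat_mulVec_hasSum P t (A.indicator 1)) x).neg
  simp only [Pi.smul_apply, smul_eq_mul, ← mul_neg] at hsum
  have hbound := le_of_hasSum_poissonWeight (A := -S) (C := S / (m - t) ^ 2) ht hsum fun k => by
    rcases le_total k m with hkm | hmk
    · have hstay : S ≤ (P ^ k *ᵥ A.indicator 1) x :=
        (antitone_stayProb hP A hkm x).trans (stayProb_le_pow_mulVec hP A k x)
      have : 0 ≤ S / (m - t) ^ 2 * (k - t) ^ 2 := by positivity
      linarith
    · have hnonneg : 0 ≤ (P ^ k *ᵥ A.indicator 1) x :=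
        (stayProb_nonneg hP A k x).trans (stayProb_le_pow_mulVec hP A k x)
      have hfar : S ≤ S / (m - t) ^ 2 * (k - t) ^ 2 := by
        rw [div_mul_eq_mul_div, le_div_iff₀ (by positivity)]
        gcongr
      linarith
  have : S * (1 - t / (m - t) ^ 2) = S - S / (m - t) ^ 2 * t := by ring
  linarith

theorem stayProb_le_two_mul (μ : Ω → ℝ) (hP : IsStochastic P) (A : Set Ω) (ht : 0 ≤ t) {m : ℕ}
    (htm : t < m) (hdev : t / (m - t) ^ 2 ≤ 1 / 2) (x : Ω) :
    stayProb P A m x ≤ 2 * (μ ⬝ᵥ A.indicator 1 + ‖heat P t - stationaryKernel μ‖) := by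
  have hind : ‖A.indicator (1 : Ω → ℝ)‖ ≤ 1 :=
    (pi_norm_le_iff_of_nonneg zero_le_one).2 fun y =>
      (norm_indicator_le_norm_self 1 y).trans_eq norm_one
  have hmix : ((heat P t - stationaryKernel μ) *ᵥ A.indicator 1) x ≤
      ‖heat P t - stationaryKernel μ‖ :=
    (le_abs_self _).trans ((norm_le_pi_norm _ x).trans
      ((linfty_opNorm_mulVec _ _).trans (mul_le_of_le_one_right (norm_nonneg _) hind)))
  rw [sub_mulVec, stationaryKernel_mulVec, Pi.sub_apply, Pi.smul_apply, Pi.one_apply,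
    smul_eq_mul, mul_one] at hmix
  have hheat := stayProb_mul_le_heat_mulVec hP A ht htm x
  have hhalf := mul_le_mul_of_nonneg_left hdev (stayProb_nonneg hP A m x)
  linarith

theorem abs_pow_mulVec_le_add_stayProb (hP : IsStochastic P) {f : Ω → ℝ} {η C : ℝ} (hη : 0 ≤ η)
    (hf : ‖f‖ ≤ C) {m : ℕ} (hA : ∀ i ≤ m, ∀ x ∉ A, |(P ^ i *ᵥ f) x| ≤ η) :
    |P ^ m *ᵥ f| ≤ η • 1 + C • stayProb P A m := by
  suffices ∀ k ≤ m, |P ^ k *ᵥ f| ≤ η • 1 + C • stayProb P A k from this m le_rfl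
  intro k hk
  induction k with
  | zero =>
    intro x
    by_cases hx : x ∈ A
    · have hfx : |f x| ≤ C := (norm_le_pi_norm f x).trans hf
      simpa [stayProb, hx] using hfx.trans (le_add_of_nonneg_left hη)
    · simpa [stayProb_of_notMem hx] using hA 0 hk x hx
  | succ k ih =>
    intro x
    by_cases hx : x ∈ A
    · calc |P ^ (k + 1) *ᵥ f| x = |P *ᵥ (P ^ k *ᵥ f)| x := by rw [pow_succ', mulVec_mulVec]
        _ ≤ (P *ᵥ |P ^ k *ᵥ f|) x := hP.abs_mulVec_le _ x
        _ ≤ (P *ᵥ (η • 1 + C • stayProb P A k)) x :=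
          hP.mulVec_mono (ih (k.le_succ.trans hk)) x
        _ = (η • 1 + C • stayProb P A (k + 1)) x := by
          simp only [mulVec_add, mulVec_smul, hP.mulVec_one, Pi.add_apply, Pi.smul_apply, stayProb,
            Set.indicator_of_mem hx]
    · simpa [stayProb_of_notMem hx] using hA (k + 1) hk x hx

end Confinement

section Maximal

theorem sq_le_sq_add_sum_abs_sub_mul_add (a : ℕ → ℝ) {i n : ℕ} (hi : i ≤ n) :
    a i ^ 2 ≤ a 0 ^ 2 + ∑ k ∈ Finset.range n, |(a (k + 1) - a k) * (a (k + 1) + a k)| := by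
  have htel : a i ^ 2 - a 0 ^ 2 =
      ∑ k ∈ Finset.range i, (a (k + 1) - a k) * (a (k + 1) + a k) := by
    rw [← Finset.sum_range_sub (fun k => a k ^ 2)]
    exact Finset.sum_congr rfl fun k _ => by ring
  rw [← sub_le_iff_le_add', htel]
  exact (Finset.sum_le_sum fun k _ => le_abs_self _).trans
    (Finset.sum_le_sum_of_subset_of_nonneg (Finset.range_subset_range.2 hi)
      fun _ _ _ => abs_nonneg _)

variable {Ω : Type*} [Fintype Ω] {μ : Ω → ℝ}

theorem dotProduct_indicator_exists_lt_le (hμ : ∀ x, 0 ≤ μ x) {u : ℕ → Ω → ℝ} {D E η : ℝ}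
    (hη : 0 < η) {n : ℕ} (hE : ∀ i ≤ n, l2Seminorm μ (u i) ≤ E)
    (hD : ∀ i < n, l2Seminorm μ (u (i + 1) - u i) ≤ D) :
    μ ⬝ᵥ {x | ∃ i ≤ n, η < |u i x|}.indicator 1 ≤ (E ^ 2 + 2 * n * D * E) / η ^ 2 := by
  set A : Set Ω := {x | ∃ i ≤ n, η < |u i x|}
  set v : ℕ → Ω → ℝ := fun k => (u (k + 1) - u k) * (u (k + 1) + u k)
  have hdom : η ^ 2 • A.indicator 1 ≤ u 0 * u 0 + ∑ k ∈ Finset.range n, |v k| := fun x => by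
    rw [Pi.smul_apply, Pi.add_apply, Pi.mul_apply, Finset.sum_apply, ← sq]
    by_cases hx : x ∈ A
    · rw [Set.indicator_of_mem hx, Pi.one_apply, smul_eq_mul, mul_one]
      obtain ⟨i, hi, hlt⟩ := hx
      exact (sq_le_sq.2 ((abs_of_pos hη).trans_le hlt.le)).trans
        (sq_le_sq_add_sum_abs_sub_mul_add (fun k => u k x) hi)
    · rw [Set.indicator_of_notMem hx, smul_zero]
      exact add_nonneg (sq_nonneg _) (Finset.sum_nonneg fun k _ => abs_nonneg (v k x))
  have hv : ∀ k ∈ Finset.range n, μ ⬝ᵥ |v k| ≤ D * (2 * E) := fun k hk => by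
    have hk := Finset.mem_range.1 hk
    have hsum := (map_add_le_add (l2Seminorm μ) (u (k + 1)) (u k)).trans
      (add_le_add (hE (k + 1) hk) (hE k hk.le))
    calc μ ⬝ᵥ |v k| ≤ l2Seminorm μ (u (k + 1) - u k) * l2Seminorm μ (u (k + 1) + u k) :=
          dotProduct_abs_mul_le_l2Seminorm_mul hμ _ _
      _ ≤ D * (2 * E) := mul_le_mul (hD k hk) (by linarith) (apply_nonneg _ _)
          ((apply_nonneg _ _).trans (hD k hk))
  rw [le_div_iff₀ (by positivity), mul_comm, ← smul_eq_mul, ← dotProduct_smul]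
  calc μ ⬝ᵥ (η ^ 2 • A.indicator 1) ≤ μ ⬝ᵥ (u 0 * u 0 + ∑ k ∈ Finset.range n, |v k|) :=
        dotProduct_le_dotProduct_of_nonneg_left hdom hμ
    _ = l2Seminorm μ (u 0) ^ 2 + ∑ k ∈ Finset.range n, μ ⬝ᵥ |v k| := by
        rw [dotProduct_add, dotProduct_sum, l2Seminorm_sq hμ]
    _ ≤ E ^ 2 + ∑ _k ∈ Finset.range n, D * (2 * E) :=
        add_le_add (pow_le_pow_left₀ (apply_nonneg _ _) (hE 0 n.zero_le) 2) (Finset.sum_le_sum hv)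
    _ = E ^ 2 + 2 * n * D * E := by
        rw [Finset.sum_const, Finset.card_range, nsmul_eq_mul]
        ring

variable [DecidableEq Ω] {P : Matrix Ω Ω ℝ}

theorem norm_pow_mulVec_le (hμ : ∀ x, 0 ≤ μ x) (hP : IsStochastic P) {f : Ω → ℝ} {m : ℕ}
    {t C D E η : ℝ} (hη : 0 < η) (hf : ‖f‖ ≤ C) (ht : 0 ≤ t) (htm : t < m)
    (hdev : t / (m - t) ^ 2 ≤ 1 / 2) (hE : ∀ i ≤ m, l2Seminorm μ (P ^ i *ᵥ f) ≤ E)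
    (hD : ∀ i < m, l2Seminorm μ (P ^ (i + 1) *ᵥ f - P ^ i *ᵥ f) ≤ D) :
    ‖P ^ m *ᵥ f‖ ≤
      η + C * (2 * ((E ^ 2 + 2 * m * D * E) / η ^ 2 + ‖heat P t - stationaryKernel μ‖)) := by
  set A : Set Ω := {x | ∃ i ≤ m, η < |(P ^ i *ᵥ f) x|}
  set r := ‖heat P t - stationaryKernel μ‖
  have hC : 0 ≤ C := (norm_nonneg f).trans hf
  have hmass : μ ⬝ᵥ A.indicator 1 ≤ (E ^ 2 + 2 * m * D * E) / η ^ 2 :=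
    dotProduct_indicator_exists_lt_le hμ hη hE hD
  have hstay : ∀ x, stayProb P A m x ≤ 2 * ((E ^ 2 + 2 * m * D * E) / η ^ 2 + r) := fun x =>
    (stayProb_le_two_mul μ hP A ht htm hdev x).trans (by linarith)
  have hmass_nonneg : 0 ≤ μ ⬝ᵥ A.indicator 1 :=
    dotProduct_nonneg_of_nonneg hμ fun x => Set.indicator_nonneg (fun _ _ => zero_le_one) x
  have hr : 0 ≤ r := norm_nonneg _
  refine (pi_norm_le_iff_of_nonneg
    (add_nonneg hη.le (mul_nonneg hC (by linarith)))).2 fun x => ?_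
  have habs := abs_pow_mulVec_le_add_stayProb (A := A) hP hη.le hf
    (fun i hi y hy => not_lt.1 fun hlt => hy ⟨i, hi, hlt⟩) x
  simp only [Pi.add_apply, Pi.smul_apply, Pi.one_apply, smul_eq_mul, mul_one] at habs
  exact habs.trans (add_le_add_right (mul_le_mul_of_nonneg_left (hstay x) hC) η)

end Maximal

section UpperBound

theorem exists_add_eq_ceil_mul {δ t : ℝ} (hδ : 0 < δ) (hδ1 : δ ≤ 1) (ht : 8 / δ ^ 2 ≤ t) :
    ∃ s m : ℕ, s + m = ⌈(1 + δ) * t⌉₊ ∧ δ * t / 4 ≤ s ∧ m ≤ 3 * t ∧ t < m ∧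
      t / (m - t) ^ 2 ≤ 1 / 2 := by
  have ht0 : 0 < t := lt_of_lt_of_le (by positivity) ht
  have hδt : 8 ≤ δ ^ 2 * t := by rwa [div_le_iff₀' (by positivity)] at ht
  have hδt8 : 8 ≤ δ * t := by
    rw [sq, mul_assoc] at hδt
    exact hδt.trans (mul_le_of_le_one_left (by positivity) hδ1)
  have hδt_le : δ * t ≤ t := mul_le_of_le_one_left ht0.le hδ1
  have hceil := Nat.le_ceil ((1 + δ) * t)
  have hceil_lt : ⌈(1 + δ) * t⌉₊ < (1 + δ) * t + 1 := Nat.ceil_lt_add_one (by positivity)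
  have hs : δ * t / 4 ≤ ⌈δ * t / 4⌉₊ := Nat.le_ceil _
  have hs_lt : ⌈δ * t / 4⌉₊ < δ * t / 4 + 1 := Nat.ceil_lt_add_one (by positivity)
  obtain ⟨m, hm⟩ := Nat.exists_eq_add_of_le
    (Nat.cast_le.1 (by linarith : (⌈δ * t / 4⌉₊ : ℝ) ≤ ⌈(1 + δ) * t⌉₊))
  have hm_cast : (⌈(1 + δ) * t⌉₊ : ℝ) = ⌈δ * t / 4⌉₊ + m := by rw [hm, Nat.cast_add]
  have hmt : δ * t / 2 ≤ m - t := by linarith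
  refine ⟨⌈δ * t / 4⌉₊, m, hm.symm, hs, by linarith, by linarith, ?_⟩
  calc t / (m - t) ^ 2 ≤ t / (δ * t / 2) ^ 2 := by gcongr
    _ = 4 / (δ ^ 2 * t) := by field_simp; norm_num
    _ ≤ 4 / 8 := by gcongr
    _ = 1 / 2 := by norm_num

namespace IsRegularizing

variable {Ω : Type*} [Fintype Ω] [DecidableEq Ω] {P B : Matrix Ω Ω ℝ} {μ f : Ω → ℝ}
  {s k j m : ℕ} {t C D E η : ℝ}

theorem l2Seminorm_pow_mul_mulVec_sub_le (hB : IsRegularizing P B μ) (hf : l2Seminorm μ f ≤ C)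
    (hs : 0 < s) (hsk : s ≤ k) :
    l2Seminorm μ ((P ^ k * B) *ᵥ f - (P ^ (k + 1) * B) *ᵥ f) ≤ 2 * C / s := by
  rw [← sub_mulVec, le_div_iff₀' (Nat.cast_pos.2 hs)]
  calc s * l2Seminorm μ ((P ^ k * B - P ^ (k + 1) * B) *ᵥ f)
      ≤ k * l2Seminorm μ ((P ^ k * B - P ^ (k + 1) * B) *ᵥ f) := by gcongr
    _ ≤ 2 * l2Seminorm μ f := hB.mul_l2Seminorm_le k f
    _ ≤ 2 * C := by gcongr

theorem norm_pow_add_mul_mulVec_le (hB : IsRegularizing P B μ) (hμ : IsProbVec μ)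
    (hP : IsStochastic P) (hrev : IsReversible P μ) (hs : 0 < s) (hη : 0 < η) (ht : 0 ≤ t)
    (htm : t < m) (hdev : t / (m - t) ^ 2 ≤ 1 / 2)
    (hmix : ‖heat P t - stationaryKernel μ‖ ≤ (1 / 2) ^ 2 ^ j) (hD : 2 * C / s ≤ D)
    (hE : 2 * t * D ≤ 2 ^ j * E) (hf : ‖f‖ ≤ C) (hmean : μ ⬝ᵥ f = 0) :
    ‖(P ^ (s + m) * B) *ᵥ f‖ ≤
      η + C * (2 * ((E ^ 2 + 2 * m * D * E) / η ^ 2 + ‖heat P t - stationaryKernel μ‖)) := by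
  have hstep : ∀ i, l2Seminorm μ ((P ^ (s + i) * B) *ᵥ f - (P ^ (s + i + 1) * B) *ᵥ f) ≤ D :=
    fun i => (hB.l2Seminorm_pow_mul_mulVec_sub_le ((l2Seminorm_le_norm hμ f).trans hf) hs
      (Nat.le_add_right s i)).trans hD
  have hsize : ∀ i, l2Seminorm μ ((P ^ (s + i) * B) *ᵥ f) ≤ E := fun i => by
    have hmean_i : μ ⬝ᵥ (P ^ (s + i) * B) *ᵥ f = 0 := by
      rw [← mulVec_mulVec, (hrev.pow _).dotProduct_mulVec_of_mulVec_one (hP.pow _).mulVec_one,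
        hB.isReversible.dotProduct_mulVec_of_mulVec_one hB.isStochastic.mulVec_one, hmean]
    have hgap := hrev.two_pow_mul_l2Seminorm_le hμ.1 hP ht hmix hmean_i
    rw [mulVec_mulVec, ← mul_assoc, ← pow_succ'] at hgap
    refine le_of_mul_le_mul_left (hgap.trans ?_) (by positivity : (0 : ℝ) < 2 ^ j)
    exact (mul_le_mul_of_nonneg_left (hstep i) (by positivity)).trans hE
  have hpow : ∀ i, P ^ i *ᵥ ((P ^ s * B) *ᵥ f) = (P ^ (s + i) * B) *ᵥ f := fun i => by
    rw [mulVec_mulVec, ← mul_assoc, ← pow_add, add_comm]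
  have hnorm : ‖(P ^ s * B) *ᵥ f‖ ≤ C := (linfty_opNorm_mulVec _ _).trans <|
    (mul_le_of_le_one_left (norm_nonneg _)
      ((hP.pow s).mul hB.isStochastic).norm_le_one).trans hf
  rw [← hpow]
  refine norm_pow_mulVec_le hμ.1 hP hη hnorm ht htm hdev (fun i _ => ?_) fun i _ => ?_
  · rw [hpow]
    exact hsize i
  · rw [hpow, hpow, map_sub_rev]
    exact hstep i

theorem norm_pow_add_mul_sub_le (hB : IsRegularizing P B μ) (hμ : IsProbVec μ)
    (hP : IsStochastic P) (hrev : IsReversible P μ) (hs : 0 < s) (hη : 0 < η) (ht : 0 ≤ t)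
    (htm : t < m) (hdev : t / (m - t) ^ 2 ≤ 1 / 2)
    (hmix : ‖heat P t - stationaryKernel μ‖ ≤ (1 / 2) ^ 2 ^ j) (hD : 4 / s ≤ D)
    (hE : 2 * t * D ≤ 2 ^ j * E) :
    ‖P ^ (s + m) * B - stationaryKernel μ‖ ≤
      η + 4 * ((E ^ 2 + 2 * m * D * E) / η ^ 2 + ‖heat P t - stationaryKernel μ‖) := by
  refine linfty_opNorm_le_of_forall_mulVec fun f hf => ?_
  have hcenter : (P ^ (s + m) * B - stationaryKernel μ) *ᵥ f =
      (P ^ (s + m) * B) *ᵥ ((1 - stationaryKernel μ) *ᵥ f) := by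
    rw [mulVec_mulVec, mul_sub, mul_one,
      mul_stationaryKernel ((hP.pow _).mul hB.isStochastic).mulVec_one]
  have hnorm : ‖(1 - stationaryKernel μ) *ᵥ f‖ ≤ 2 := (linfty_opNorm_mulVec _ _).trans <|
    (mul_le_of_le_one_right (norm_nonneg _) hf).trans
      (IsStochastic.one.norm_sub_stationaryKernel_le_two hμ)
  have hmean : μ ⬝ᵥ (1 - stationaryKernel μ) *ᵥ f = 0 := by
    simp only [sub_mulVec, one_mulVec, stationaryKernel_mulVec, dotProduct_sub,
      dotProduct_smul, hμ.dotProduct_one_eq_one, smul_eq_mul, mul_one, sub_self]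
  rw [hcenter]
  refine (hB.norm_pow_add_mul_mulVec_le hμ hP hrev hs hη ht htm hdev hmix
    (by norm_num only; exact hD) hE hnorm hmean).trans_eq ?_
  ring

theorem norm_pow_mul_sub_le_of_mul_le (hB : IsRegularizing P B μ) (hμ : IsProbVec μ)
    (hP : IsStochastic P) (hrev : IsReversible P μ) {δ : ℝ} (hδ : 0 < δ) (hδ1 : δ ≤ 1)
    (hη : 0 < η) (ht : 8 / δ ^ 2 ≤ t)
    (hmix : ‖heat P t - stationaryKernel μ‖ ≤ (1 / 2) ^ 2 ^ j) {N : ℕ} (hN : (1 + δ) * t ≤ N) :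
    ‖P ^ N * B - stationaryKernel μ‖ ≤
      η + 4 * (4096 / (δ ^ 2 * 2 ^ j) / η ^ 2 + ‖heat P t - stationaryKernel μ‖) := by
  have ht0 : 0 < t := lt_of_lt_of_le (by positivity) ht
  obtain ⟨s, m, hsm, hs, hm3, htm, hdev⟩ := exists_add_eq_ceil_mul hδ hδ1 ht
  have hs0 : (0 : ℝ) < s := lt_of_lt_of_le (by positivity) hs
  have hD : 4 / s ≤ 16 / (δ * t) := by
    calc 4 / s ≤ 4 / (δ * t / 4) := by gcongr
      _ = 16 / (δ * t) := by field_simp; norm_num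
  have hE : 2 * t * (16 / (δ * t)) = 2 ^ j * (32 / (2 ^ j * δ)) := by
    field_simp
    norm_num
  have hE_le : 32 / (2 ^ j * δ) ≤ 32 / δ := by
    gcongr
    exact le_mul_of_one_le_left hδ.le (one_le_pow₀ one_le_two)
  have hmass : (32 / (2 ^ j * δ)) ^ 2 + 2 * m * (16 / (δ * t)) * (32 / (2 ^ j * δ)) ≤
      4096 / (δ ^ 2 * 2 ^ j) := by
    calc (32 / (2 ^ j * δ)) ^ 2 + 2 * m * (16 / (δ * t)) * (32 / (2 ^ j * δ))
        ≤ 32 / δ * (32 / (2 ^ j * δ)) +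
          2 * (3 * t) * (16 / (δ * t)) * (32 / (2 ^ j * δ)) := by
          rw [sq]
          gcongr
      _ = 4096 / (δ ^ 2 * 2 ^ j) := by field_simp; norm_num
  refine (antitone_norm_pow_mul_sub_stationaryKernel hP B μ (Nat.ceil_le.2 hN)).trans ?_
  rw [← hsm]
  refine (hB.norm_pow_add_mul_sub_le hμ hP hrev (Nat.cast_pos.1 hs0) hη ht0.le htm hdev hmix hD
    hE.le).trans ?_
  gcongr η + 4 * (?_ / η ^ 2 + _)

end IsRegularizing

theorem tendsto_norm_pow_mul_sub_stationaryKernel {ι : Type*} {l : Filter ι} {Ω : ι → Type*}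
    [∀ n, Fintype (Ω n)] [∀ n, DecidableEq (Ω n)] {P B : ∀ n, Matrix (Ω n) (Ω n) ℝ}
    {μ : ∀ n, Ω n → ℝ} (hB : ∀ n, IsRegularizing (P n) (B n) (μ n)) (hμ : ∀ n, IsProbVec (μ n))
    (hP : ∀ n, IsStochastic (P n)) (hrev : ∀ n, IsReversible (P n) (μ n)) {t : ι → ℝ}
    {N : ι → ℕ} {δ : ℝ} (hδ : 0 < δ) (ht : Tendsto t l atTop)
    (hmix : Tendsto (fun n => ‖heat (P n) (t n) - stationaryKernel (μ n)‖) l (nhds 0))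
    (hN : ∀ᶠ n in l, (1 + δ) * t n ≤ N n) :
    Tendsto (fun n => ‖P n ^ N n * B n - stationaryKernel (μ n)‖) l (nhds 0) := by
  refine tendsto_order.2 ⟨fun a ha => .of_forall fun n => ha.trans_le (norm_nonneg _),
    fun η hη => ?_⟩
  set δ₁ := min δ 1
  have hδ₁ : 0 < δ₁ := lt_min hδ one_pos
  obtain ⟨j, hj⟩ : ∃ j : ℕ, 4096 / (δ₁ ^ 2 * 2 ^ j) / (η / 4) ^ 2 < η / 16 := by
    obtain ⟨j, hj⟩ := pow_unbounded_of_one_lt (4096 / (δ₁ ^ 2 * (η / 4) ^ 2 * (η / 16)))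
      (one_lt_two (α := ℝ))
    refine ⟨j, ?_⟩
    rw [div_lt_iff₀ (by positivity)] at hj
    rw [div_div, div_lt_iff₀ (by positivity)]
    linarith
  filter_upwards [ht.eventually_ge_atTop (8 / δ₁ ^ 2), hN,
    hmix.eventually_le_const (by positivity : (0 : ℝ) < (1 / 2) ^ 2 ^ j),
    hmix.eventually_lt_const (by positivity : 0 < η / 16)] with n htn hNn hjn hηn
  have ht0 : 0 ≤ t n := le_trans (by positivity) htn
  have hN₁ : (1 + δ₁) * t n ≤ N n := le_trans (by gcongr; exact min_le_left δ 1) hNn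
  have hbound := (hB n).norm_pow_mul_sub_le_of_mul_le (hμ n) (hP n) (hrev n) hδ₁
    (min_le_right δ 1) (by positivity : 0 < η / 4) htn hjn hN₁
  linarith

end UpperBound

section LowerBound

theorem IsRegularizing.norm_heat_sub_le {Ω : Type*} [Fintype Ω] [DecidableEq Ω]
    {P B : Matrix Ω Ω ℝ} {μ : Ω → ℝ} (hB : IsRegularizing P B μ) (hμ : IsProbVec μ)
    (hP : IsStochastic P) {m : ℕ} {t : ℝ} (hmt : m < t) :
    ‖heat P t - stationaryKernel μ‖ ≤
      ‖P ^ m * B - stationaryKernel μ‖ + 2 / (t - m) ^ 2 * t + (√t)⁻¹ := by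
  have ht : 0 < t := m.cast_nonneg.trans_lt hmt
  have hsum : HasSum (fun k => poissonWeight t k • (P ^ k * B - stationaryKernel μ))
      (heat P t * B - stationaryKernel μ) := by
    have h := ((heat_hasSum P t).mul_right B).sub
      ((hasSum_poissonWeight t).smul_const (stationaryKernel μ))
    rw [one_smul] at h
    exact h.congr_fun fun k => by rw [smul_sub, smul_mul_assoc]
  have hdiscrete := norm_le_of_hasSum_poissonWeight (A := ‖P ^ m * B - stationaryKernel μ‖)
    (C := 2 / (t - m) ^ 2) ht.le hsum fun k => by
      have hgap : 0 < t - m := sub_pos.2 hmt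
      rcases le_total m k with hmk | hkm
      · exact (antitone_norm_pow_mul_sub_stationaryKernel hP B μ hmk).trans
          (le_add_of_nonneg_right (by positivity))
      · have hfar : t - m ≤ t - k := by gcongr
        refine le_add_of_nonneg_of_le (norm_nonneg _) ?_
        calc ‖P ^ k * B - stationaryKernel μ‖ ≤ 2 :=
              ((hP.pow k).mul hB.isStochastic).norm_sub_stationaryKernel_le_two hμ
          _ = 2 / (t - m) ^ 2 * (t - m) ^ 2 := by field_simp
          _ ≤ 2 / (t - m) ^ 2 * (t - k) ^ 2 := by gcongr
          _ = 2 / (t - m) ^ 2 * (k - t) ^ 2 := by rw [sub_sq_comm t (k : ℝ)]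
  have hsmooth := hB.norm_heat_mul_one_sub_le ht
  calc ‖heat P t - stationaryKernel μ‖
      = ‖(heat P t * B - stationaryKernel μ) + heat P t * (1 - B)‖ := by
        rw [mul_sub, mul_one]
        abel_nf
    _ ≤ _ := (norm_add_le _ _).trans (add_le_add hdiscrete hsmooth)

theorem eventually_norm_heat_sub_le {ι : Type*} {l : Filter ι} {Ω : ι → Type*}
    [∀ n, Fintype (Ω n)] [∀ n, DecidableEq (Ω n)] {P B : ∀ n, Matrix (Ω n) (Ω n) ℝ}
    {μ : ∀ n, Ω n → ℝ} (hB : ∀ n, IsRegularizing (P n) (B n) (μ n)) (hμ : ∀ n, IsProbVec (μ n))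
    (hP : ∀ n, IsStochastic (P n)) {t : ι → ℝ} {δ η : ℝ} (hδ : 0 < δ) (hη : 0 < η)
    (ht : Tendsto t l atTop) :
    ∀ᶠ n in l, ∀ m : ℕ, m ≤ (1 - δ) * t n → ‖heat (P n) (t n) - stationaryKernel (μ n)‖ ≤
      ‖P n ^ m * B n - stationaryKernel (μ n)‖ + η := by
  have hlim : Tendsto (fun s : ℝ => 2 / δ ^ 2 * s⁻¹ + (√s)⁻¹) atTop (nhds 0) := by
    simpa using (tendsto_inv_atTop_zero.const_mul (2 / δ ^ 2)).add
      (tendsto_inv_atTop_zero.comp Real.tendsto_sqrt_atTop)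
  filter_upwards [ht.eventually_gt_atTop 0, (hlim.comp ht).eventually_le_const hη]
    with n ht0 hηn m hm
  have hgap : δ * t n ≤ t n - m := by linarith
  have hgap0 : 0 < δ * t n := by positivity
  have hdev : 2 / (t n - m) ^ 2 * t n ≤ 2 / δ ^ 2 * (t n)⁻¹ := by
    calc 2 / (t n - m) ^ 2 * t n ≤ 2 / (δ * t n) ^ 2 * t n := by gcongr
      _ = 2 / δ ^ 2 * (t n)⁻¹ := by field_simp
  have hbound := (hB n).norm_heat_sub_le (hμ n) (hP n) (by linarith : (m : ℝ) < t n)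
  simp only [Function.comp_apply] at hηn
  linarith

end LowerBound

section ContMix

variable {Ω : Type*} [Fintype Ω] [DecidableEq Ω] {P : Matrix Ω Ω ℝ} {μ : Ω → ℝ} {ε ε' t : ℝ}

theorem deltaMass_vecMul (x : Ω) (K : Matrix Ω Ω ℝ) : deltaMass x ᵥ* K = K x := by
  have h : deltaMass x = Pi.single x 1 := funext fun y => (Pi.single_apply x (1 : ℝ) y).symm
  rw [h, single_one_vecMul, row]

theorem contDistMax_eq (P : Matrix Ω Ω ℝ) (μ : Ω → ℝ) (t : ℝ) :
    contDistMax P μ t = ‖heat P t - stationaryKernel μ‖ / 2 := by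
  have hrow : ∀ x, (fun y => ∑' k, poissonWeight t k * (P ^ k) x y) = heat P t x := fun x =>
    funext fun y => (Pi.hasSum.1 (Pi.hasSum.1 (heat_hasSum P t) x) y).tsum_eq
  simp only [contDistMax, contDist, deltaMass_vecMul, ← iSup_tvDist_eq_norm_sub_div_two, ← hrow,
    poissonWeight]

theorem contDistMax_lazyM (P : Matrix Ω Ω ℝ) (μ : Ω → ℝ) (t : ℝ) :
    contDistMax (lazyM P) μ (2 * t) = contDistMax P μ t := by
  rw [contDistMax_eq, contDistMax_eq, heat_lazyM]

theorem antitoneOn_contDistMax (hP : IsStochastic P) (μ : Ω → ℝ) :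
    AntitoneOn (contDistMax P μ) (Set.Ici 0) := fun s hs t ht hst => by
  rw [contDistMax_eq, contDistMax_eq]
  exact div_le_div_of_nonneg_right (antitoneOn_norm_heat_sub_stationaryKernel hP μ hs ht hst)
    zero_le_two

theorem contDistMax_zero_le (hP : IsStochastic P) (μ : Ω → ℝ) (ht : 0 ≤ t) :
    contDistMax P μ 0 ≤ Real.exp (2 * t) * contDistMax P μ t := by
  rw [contDistMax_eq, contDistMax_eq, heat_zero, ← mul_div_assoc]
  exact div_le_div_of_nonneg_right (norm_one_sub_stationaryKernel_le hP ht) zero_le_two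

theorem contMix_nonneg (P : Matrix Ω Ω ℝ) (μ : Ω → ℝ) (ε : ℝ) : 0 ≤ contMix P μ ε :=
  Real.sInf_nonneg fun _ ht => ht.1

theorem contMix_le (ht : 0 ≤ t) (h : contDistMax P μ t ≤ ε) : contMix P μ ε ≤ t :=
  csInf_le ⟨0, fun _ hs => hs.1⟩ ⟨ht, h⟩

theorem lt_contDistMax_of_lt_contMix (ht : 0 ≤ t) (h : t < contMix P μ ε) :
    ε < contDistMax P μ t :=
  not_le.1 fun hle => h.not_ge (contMix_le ht hle)

/-- The infimum of the empty set is `0`, so a positive mixing time is attained in the limit. -/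
theorem contDistMax_le_of_contMix_lt (hP : IsStochastic P) (h0 : 0 < contMix P μ ε)
    (h : contMix P μ ε < t) : contDistMax P μ t ≤ ε := by
  have hne : {t : ℝ | 0 ≤ t ∧ contDistMax P μ t ≤ ε}.Nonempty := by
    refine Set.nonempty_iff_ne_empty.2 fun hempty => h0.ne' ?_
    rw [contMix, hempty, Real.sInf_empty]
  obtain ⟨s, ⟨hs, hsε⟩, hst⟩ := exists_lt_of_csInf_lt hne h
  exact (antitoneOn_contDistMax hP μ hs (hs.trans hst.le) hst.le).trans hsε

theorem contMix_le_contMix (hP : IsStochastic P) (h0 : 0 < contMix P μ ε) (hε : ε ≤ ε') :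
    contMix P μ ε' ≤ contMix P μ ε :=
  le_of_forall_gt_imp_ge_of_dense fun _ ht =>
    contMix_le (h0.trans ht).le ((contDistMax_le_of_contMix_lt hP h0 ht).trans hε)

theorem contMix_lazyM (P : Matrix Ω Ω ℝ) (μ : Ω → ℝ) (ε : ℝ) :
    contMix (lazyM P) μ ε = 2 * contMix P μ ε := by
  have hset : {t : ℝ | 0 ≤ t ∧ contDistMax (lazyM P) μ t ≤ ε} =
      (2 * ·) '' {t : ℝ | 0 ≤ t ∧ contDistMax P μ t ≤ ε} := by
    refine Set.eq_of_subset_of_subset (fun t ht => ⟨t / 2, ?_, by ring⟩) ?_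
    · rw [Set.mem_ofPred_eq, ← contDistMax_lazyM, mul_div_cancel₀ t two_ne_zero]
      exact ⟨div_nonneg ht.1 zero_le_two, ht.2⟩
    · rintro _ ⟨t, ht, rfl⟩
      exact ⟨mul_nonneg zero_le_two ht.1, (contDistMax_lazyM P μ t).trans_le ht.2⟩
  rw [contMix, contMix, hset, ← smul_eq_mul, ← Real.sInf_smul_of_nonneg zero_le_two]
  rfl

end ContMix

section Cutoff

variable {Ω : ℕ → Type} [∀ n, Fintype (Ω n)] [∀ n, DecidableEq (Ω n)]
  {P B : ∀ n, Matrix (Ω n) (Ω n) ℝ} {μ : ∀ n, Ω n → ℝ} {ε a δ : ℝ}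

namespace ContCutoff

protected theorem lazy (hc : ContCutoff P μ) : ContCutoff (fun n => lazyM (P n)) μ :=
  fun ε h0 h1 => by
    simpa only [contMix_lazyM, mul_div_mul_left _ _ (two_ne_zero' ℝ)] using hc ε h0 h1

theorem eventually_contMix_pos (hc : ContCutoff P μ) (h0 : 0 < ε) (h1 : ε < 1) :
    ∀ᶠ n in atTop, 0 < contMix (P n) (μ n) ε := by
  filter_upwards [(hc ε h0 h1).eventually_ne one_ne_zero] with n hn
  exact (contMix_nonneg _ _ _).lt_of_ne' (div_ne_zero_iff.1 hn).1

theorem eventually_contDistMax_le (hc : ContCutoff P μ) (hP : ∀ n, IsStochastic (P n))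
    (h0 : 0 < ε) (h1 : ε < 1) (ha : 0 < a) (hδ : 0 < δ) :
    ∀ᶠ n in atTop, contDistMax (P n) (μ n) ((1 + δ) * contMix (P n) (μ n) ε) ≤ a := by
  obtain ⟨b, hb0, hb⟩ := exists_between (lt_min ha (sub_pos.2 h1))
  obtain ⟨hba, hbε⟩ := lt_min_iff.1 hb
  filter_upwards [hc.eventually_contMix_pos hb0 (by linarith),
    hc.eventually_contMix_pos (sub_pos.2 (by linarith : b < 1)) (by linarith),
    hc.eventually_contMix_pos h0 h1,
    (hc b hb0 (by linarith)).eventually_lt_const (by linarith : 1 < 1 + δ)]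
    with n hpos hpos' hposε hratio
  refine (contDistMax_le_of_contMix_lt (hP n) hpos ?_).trans hba.le
  calc contMix (P n) (μ n) b < (1 + δ) * contMix (P n) (μ n) (1 - b) :=
        (div_lt_iff₀ hpos').1 hratio
    _ ≤ (1 + δ) * contMix (P n) (μ n) ε := by
        gcongr
        exact contMix_le_contMix (hP n) hposε (by linarith)

theorem eventually_lt_contDistMax (hc : ContCutoff P μ) (hP : ∀ n, IsStochastic (P n))
    (h0 : 0 < ε) (h1 : ε < 1) (ha : a < 1) (hδ : 0 < δ) (hδ1 : δ ≤ 1) :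
    ∀ᶠ n in atTop, a < contDistMax (P n) (μ n) ((1 - δ) * contMix (P n) (μ n) ε) := by
  obtain ⟨b, hb, hb1⟩ := exists_between (max_lt ha (sub_lt_self 1 h0))
  obtain ⟨hab, hεb⟩ := max_lt_iff.1 hb
  filter_upwards [hc.eventually_contMix_pos (sub_pos.2 hb1) (by linarith),
    (hc b (by linarith) hb1).eventually_const_lt (by linarith : 1 - δ < 1)] with n hpos hratio
  refine hab.trans (lt_contDistMax_of_lt_contMix
    (mul_nonneg (sub_nonneg.2 hδ1) (contMix_nonneg _ _ _)) ?_)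
  calc (1 - δ) * contMix (P n) (μ n) ε ≤ (1 - δ) * contMix (P n) (μ n) (1 - b) :=
        mul_le_mul_of_nonneg_left (contMix_le_contMix (hP n) hpos (by linarith))
          (sub_nonneg.2 hδ1)
    _ < contMix (P n) (μ n) b := (lt_div_iff₀ hpos).1 hratio

/-- In time `t` the distance to stationarity drops by a factor at most `e ^ (2 * t)`, while at
twice the mixing time it is already arbitrarily small. -/
theorem tendsto_contMix_atTop (hc : ContCutoff P μ) (hP : ∀ n, IsStochastic (P n)) (h0 : 0 < ε)
    (h1 : ε < 1) : Tendsto (fun n => contMix (P n) (μ n) ε) atTop atTop := by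
  refine tendsto_atTop.2 fun K => ?_
  filter_upwards [hc.eventually_contMix_pos h0 h1, hc.eventually_contDistMax_le hP h0 h1
    (mul_pos (Real.exp_pos (-(4 * K))) h0) one_pos] with n hpos hmix
  set T := contMix (P n) (μ n) ε
  have hlt : ε < Real.exp (4 * (T - K)) * ε := by
    calc ε < contDistMax (P n) (μ n) 0 := lt_contDistMax_of_lt_contMix le_rfl hpos
      _ ≤ Real.exp (2 * ((1 + 1) * T)) * contDistMax (P n) (μ n) ((1 + 1) * T) :=
        contDistMax_zero_le (hP n) (μ n) (by positivity)
      _ ≤ Real.exp (2 * ((1 + 1) * T)) * (Real.exp (-(4 * K)) * ε) := by gcongr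
      _ = Real.exp (4 * (T - K)) * ε := by
        rw [← mul_assoc, ← Real.exp_add]
        ring_nf
  have hexp := Real.one_lt_exp_iff.1 ((lt_mul_iff_one_lt_left h0).1 hlt)
  linarith

end ContCutoff

end Cutoff

section DiscreteMixing

/-- The `ε`-mixing time of a discrete-time chain whose transition matrix from time `0` to time `k`
is `K k`. With `K k = P ^ k * (1 + P) / 2` it is `t_ave`, and with `K k = ((1 + P) / 2) ^ k` it is
`t_L`. -/
noncomputable def mixTime {Ω : Type*} [Fintype Ω] (K : ℕ → Matrix Ω Ω ℝ) (μ : Ω → ℝ) (ε : ℝ) : ℕ :=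
  sInf {k | ‖K k - stationaryKernel μ‖ / 2 ≤ ε}

theorem aveMix_eq_mixTime {Ω : Type*} [Fintype Ω] [DecidableEq Ω] (P : Matrix Ω Ω ℝ) (μ : Ω → ℝ)
    (ε : ℝ) : aveMix P μ ε = mixTime (fun k => P ^ k * lazyM P) μ ε := by
  have hrow : ∀ (k : ℕ) x, (fun y => ((P ^ k) x y + (P ^ (k + 1)) x y) / 2) =
      (P ^ k * lazyM P) x := fun k x => by
    ext y
    rw [lazyM, mul_smul_comm, mul_add, mul_one, ← pow_succ, Matrix.smul_apply, Matrix.add_apply,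
      smul_eq_mul, div_eq_inv_mul]
  simp only [aveMix, mixTime, aveDistMax, aveDist, deltaMass_vecMul, Nat.floor_natCast, hrow,
    iSup_tvDist_eq_norm_sub_div_two]

theorem lazyMix_eq_mixTime {Ω : Type*} [Fintype Ω] [DecidableEq Ω] (P : Matrix Ω Ω ℝ) (μ : Ω → ℝ)
    (ε : ℝ) : lazyMix P μ ε = mixTime (fun k => lazyM P ^ k * 1) μ ε := by
  simp only [lazyMix, mixTime, lazyDistMax, lazyDist, deltaMass_vecMul, Nat.floor_natCast, mul_one,
    iSup_tvDist_eq_norm_sub_div_two]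

variable {Ω : ℕ → Type} [∀ n, Fintype (Ω n)] [∀ n, DecidableEq (Ω n)]
  {P B : ∀ n, Matrix (Ω n) (Ω n) ℝ} {μ : ∀ n, Ω n → ℝ} {ε : ℝ}

namespace ContCutoff

theorem eventually_norm_pow_ceil_mul_sub_le (hc : ContCutoff P μ)
    (hB : ∀ n, IsRegularizing (P n) (B n) (μ n)) (hμ : ∀ n, IsProbVec (μ n))
    (hP : ∀ n, IsStochastic (P n)) (hrev : ∀ n, IsReversible (P n) (μ n)) (h0 : 0 < ε) (h1 : ε < 1)
    {c : ℝ} (hc1 : 1 < c) :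
    ∀ᶠ n in atTop, ‖P n ^ ⌈c * contMix (P n) (μ n) ε⌉₊ * B n - stationaryKernel (μ n)‖ / 2 ≤
      ε := by
  obtain ⟨δ, hδ, rfl⟩ : ∃ δ > 0, (1 + δ) ^ 2 = c :=
    ⟨√c - 1, sub_pos.2 (Real.lt_sqrt_of_sq_lt (by simpa)), by
      rw [add_sub_cancel, Real.sq_sqrt (by positivity)]⟩
  have hmix : Tendsto (fun n => ‖heat (P n) ((1 + δ) * contMix (P n) (μ n) ε) -
      stationaryKernel (μ n)‖) atTop (nhds 0) := by
    refine tendsto_order.2 ⟨fun a ha => .of_forall fun n => ha.trans_le (norm_nonneg _),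
      fun a ha => ?_⟩
    filter_upwards [hc.eventually_contDistMax_le hP h0 h1 (by positivity : 0 < a / 4) hδ] with n hn
    rw [contDistMax_eq] at hn
    linarith
  have htime := (hc.tendsto_contMix_atTop hP h0 h1).const_mul_atTop (by positivity : 0 < 1 + δ)
  have hlim := tendsto_norm_pow_mul_sub_stationaryKernel hB hμ hP hrev hδ htime hmix
    (.of_forall fun n => by rw [← mul_assoc, ← sq]; exact Nat.le_ceil _)
  filter_upwards [hlim.eventually_le_const (by positivity : 0 < 2 * ε)] with n hn
  linarith

theorem eventually_mul_contMix_lt (hc : ContCutoff P μ)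
    (hB : ∀ n, IsRegularizing (P n) (B n) (μ n)) (hμ : ∀ n, IsProbVec (μ n))
    (hP : ∀ n, IsStochastic (P n)) (h0 : 0 < ε) (h1 : ε < 1)
    {c : ℝ} (hc0 : 0 < c) (hc1 : c < 1) :
    ∀ᶠ n in atTop, ∀ m : ℕ, ‖P n ^ m * B n - stationaryKernel (μ n)‖ / 2 ≤ ε →
      c * contMix (P n) (μ n) ε < m := by
  obtain ⟨δ, hδ, hδ1, rfl⟩ : ∃ δ, 0 < δ ∧ δ < 1 ∧ (1 - δ) ^ 2 = c :=
    ⟨1 - √c, sub_pos.2 ((Real.sqrt_lt' one_pos).2 (by simpa)),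
      sub_lt_self 1 (Real.sqrt_pos.2 hc0), by
      rw [sub_sub_cancel, Real.sq_sqrt hc0.le]⟩
  have htime := (hc.tendsto_contMix_atTop hP h0 h1).const_mul_atTop (sub_pos.2 hδ1)
  filter_upwards [eventually_norm_heat_sub_le hB hμ hP hδ (sub_pos.2 h1) htime,
    hc.eventually_lt_contDistMax hP h0 h1 (by linarith : (1 + ε) / 2 < 1) hδ hδ1.le]
    with n hcompare hfar m hm
  rw [contDistMax_eq] at hfar
  refine not_le.1 fun hle => ?_
  have hclose := hcompare m (by rwa [← mul_assoc, ← sq])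
  linarith

theorem tendsto_mixTime_div_contMix (hc : ContCutoff P μ)
    (hB : ∀ n, IsRegularizing (P n) (B n) (μ n)) (hμ : ∀ n, IsProbVec (μ n))
    (hP : ∀ n, IsStochastic (P n)) (hrev : ∀ n, IsReversible (P n) (μ n)) (h0 : 0 < ε)
    (h1 : ε < 1) :
    Tendsto (fun n => (mixTime (fun k => P n ^ k * B n) (μ n) ε : ℝ) / contMix (P n) (μ n) ε)
      atTop (nhds 1) := by
  refine tendsto_order.2 ⟨fun a ha => ?_, fun b hb => ?_⟩
  · obtain ⟨c, hac, hc1⟩ := exists_between (max_lt ha zero_lt_one)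
    obtain ⟨hac, hc0⟩ := max_lt_iff.1 hac
    filter_upwards [hc.eventually_contMix_pos h0 h1,
      hc.eventually_norm_pow_ceil_mul_sub_le hB hμ hP hrev h0 h1 one_lt_two,
      hc.eventually_mul_contMix_lt hB hμ hP h0 h1 hc0 hc1] with n hpos hmixed hlower
    have hmem : mixTime (fun k => P n ^ k * B n) (μ n) ε ∈
        {k | ‖P n ^ k * B n - stationaryKernel (μ n)‖ / 2 ≤ ε} := Nat.sInf_mem ⟨_, hmixed⟩
    exact hac.trans ((lt_div_iff₀ hpos).2 (hlower _ hmem))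
  · obtain ⟨c, hc1, hcb⟩ := exists_between hb
    have hceil := (tendsto_nat_ceil_mul_div_atTop (zero_le_one.trans hc1.le)).comp
      (hc.tendsto_contMix_atTop hP h0 h1)
    filter_upwards [hc.eventually_norm_pow_ceil_mul_sub_le hB hμ hP hrev h0 h1 hc1,
      hceil.eventually_lt_const hcb] with n hmixed hlt
    exact (div_le_div_of_nonneg_right (Nat.cast_le.2 (Nat.sInf_le hmixed))
      (contMix_nonneg _ _ _)).trans_lt hlt

end ContCutoff

end DiscreteMixing

theorem mixing_time_ratios_of_contCutoff_general {Ω : ℕ → Type} [∀ n, Fintype (Ω n)]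
    [∀ n, DecidableEq (Ω n)] {P : ∀ n, Matrix (Ω n) (Ω n) ℝ} {pi : ∀ n, Ω n → ℝ}
    (hP : ∀ n, IsStochastic (P n)) (hpi : ∀ n, IsProbVec (pi n))
    (hrev : ∀ n, IsReversible (P n) (pi n)) (hc : ContCutoff P pi) {ε : ℝ} (h0 : 0 < ε)
    (h1 : ε < 1) :
    Tendsto (fun n => (aveMix (P n) (pi n) ε : ℝ) / contMix (P n) (pi n) ε) atTop (nhds 1) ∧
      Tendsto (fun n => (lazyMix (P n) (pi n) ε : ℝ) / (2 * contMix (P n) (pi n) ε)) atTop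
        (nhds 1) := by
  constructor
  · simp only [aveMix_eq_mixTime]
    exact hc.tendsto_mixTime_div_contMix
      (fun n => isRegularizing_lazyM (hpi n).1 (hP n) (hrev n)) hpi hP hrev h0 h1
  · simp only [lazyMix_eq_mixTime, ← contMix_lazyM]
    exact hc.lazy.tendsto_mixTime_div_contMix
      (fun n => isRegularizing_one (hpi n).1 (hP n) (hrev n)) hpi (fun n => (hP n).lazy)
      (fun n => (hrev n).lazy) h0 h1

/-- **Corollary 1.5 of Hermon–Peres, "moreover" part.**
If a sequence of finite irreducible reversible Markov chains exhibits a continuous-time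
cutoff, then `t_ave^{(n)}/t_c^{(n)} → 1` and `t_L^{(n)}/(2 t_c^{(n)}) → 1`. -/
theorem mixing_time_ratios_of_contCutoff :
    ∀ (Ω : ℕ → Type) [∀ n, Fintype (Ω n)] [∀ n, DecidableEq (Ω n)] [∀ n, Nonempty (Ω n)]
      (P : ∀ n, Matrix (Ω n) (Ω n) ℝ) (pi : ∀ n, Ω n → ℝ),
      (∀ n, IsRevMC (P n) (pi n)) →
      ContCutoff P pi →
      Tendsto (fun n => (aveMix (P n) (pi n) (1 / 4) : ℝ) / contMix (P n) (pi n) (1 / 4))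
          atTop (nhds 1) ∧
        Tendsto (fun n => (lazyMix (P n) (pi n) (1 / 4) : ℝ) /
            (2 * contMix (P n) (pi n) (1 / 4))) atTop (nhds 1) := by
  intro Ω _ _ _ P pi h hc
  exact mixing_time_ratios_of_contCutoff_general (fun n => (h n).1.1) (fun n => (h n).1.2.2.1)
    (fun n => (h n).2) hc (by norm_num) (by norm_num)
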